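/- Suppose Φ : 𝔻ⁿ → 𝔻ⁿ is holomorphic and C¹-smooth on the closed polydisc, and satisfies the rank condition (†): for every nonempty subset I ⊆ {1,…,n} of cardinality q and every ζ ∈ 𝕋ⁿ with Φ_I(ζ) ∈ 𝕋^q, the complex derivative d_ζΦ_I (the q×n Jacobian matrix of the components Φ_i, i ∈ I, at ζ) has rank q. Then for every β > -1 the composition operator C_Φ is bounded on the weighted Bergman space A²_β(𝔻ⁿ). -/

import Mathlib

open MeasureTheory Metric Set ENNReal

noncomputable section

/-- The open unit polydisc in `ℂⁿ`. -/
def polydisc (n : ℕ) : Set (Fin n → ℂ) := {z | ∀ j, ‖z j‖ < 1}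

/-- The closed unit polydisc in `ℂⁿ`. -/
def closedPolydisc (n : ℕ) : Set (Fin n → ℂ) := {z | ∀ j, ‖z j‖ ≤ 1}

/-- The distinguished boundary (torus) of the polydisc. -/
def torus (n : ℕ) : Set (Fin n → ℂ) := {z | ∀ j, ‖z j‖ = 1}

/-- The weighted Bergman measure `V_β` on the polydisc: the product of the measures
`dA_β(z) = (β+1)(1-|z|²)^β dA(z)`, where `dA` is normalized area measure on the unit disc. -/
def Vbeta (n : ℕ) (β : ℝ) : Measure (Fin n → ℂ) :=
  (volume.restrict (polydisc n)).withDensity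
    (fun z => ENNReal.ofReal (∏ j, ((β + 1) * (1 - ‖z j‖ ^ 2) ^ β / Real.pi)))

/-- The `(i,j)` entry `∂Φ_i/∂z_j(ζ)` of the complex Jacobian matrix of `Φ` at `ζ`
(computed via the derivative of the extension to the closed polydisc). -/
def jacEntry (n : ℕ) (Φ : (Fin n → ℂ) → (Fin n → ℂ)) (ζ : Fin n → ℂ) (i j : Fin n) : ℂ :=
  fderivWithin ℝ Φ (closedPolydisc n) ζ (Pi.single j 1) i

/-- The rank condition (†): for every nonempty `I ⊆ {1,…,n}` of cardinality `q` and
every `ζ ∈ 𝕋ⁿ` with `Φ_I(ζ) ∈ 𝕋^q`, the Jacobian `d_ζΦ_I` has rank `q`. -/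
def rankCond (n : ℕ) (Φ : (Fin n → ℂ) → (Fin n → ℂ)) : Prop :=
  ∀ I : Finset (Fin n), I.Nonempty → ∀ ζ ∈ torus n, (∀ i ∈ I, ‖Φ ζ i‖ = 1) →
    Matrix.rank (Matrix.of fun (i : I) (j : Fin n) => jacEntry n Φ ζ i j) = I.card

/-- The composition operator `C_Φ` is bounded on the weighted Bergman space `A²_β(𝔻ⁿ)`. -/
def bddBergman (n : ℕ) (β : ℝ) (Φ : (Fin n → ℂ) → (Fin n → ℂ)) : Prop :=
  ∃ C > (0:ℝ), ∀ f : (Fin n → ℂ) → ℂ, DifferentiableOn ℂ f (polydisc n) →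
    ∫⁻ z, ENNReal.ofReal (‖f (Φ z)‖ ^ 2) ∂(Vbeta n β) ≤
      ENNReal.ofReal C * ∫⁻ z, ENNReal.ofReal (‖f z‖ ^ 2) ∂(Vbeta n β)

/-!
By a mean value inequality over Bergman discs (a Carleson embedding), `C_Φ` is bounded as soon as
`V_β (Φ⁻¹ S) ≲ ∏ᵢ (1 - |uᵢ|²) ^ (2 + β)` for every box `S = {w | |wᵢ - uᵢ| < 1 - |uᵢ|²}`, and by
compactness it suffices to bound `V_β (Φ⁻¹ S ∩ B(p, ε))` for each `p` in the closed polydisc.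

Only the components with `|Φᵢ(p)| = 1` matter. Such a `Φᵢ` is constant on the face of the polydisc
through `p`, and so are its partial derivatives: `∂ₖΦᵢ` vanishes when `k` is a free direction, and
otherwise `conj Φᵢ(p) · pₖ · ∂ₖΦᵢ` is holomorphic along the face and real. Hence the rank condition
propagates from the torus to every boundary point, and some permutation `e` has `∂_{e i}Φᵢ(p) ≠ 0`
for all these `i`. A Hopf-type estimate (from Schwarz–Pick) then gives
`1 - |z_{e i}|² ≲ 1 - |Φᵢ(z)|²`, which together with `|Im (conj Φᵢ(p) Φᵢ(z)) - c| < 1 - |uᵢ|²`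
confines `z` in the coordinates `(1 - |z_{e i}|², Im (conj Φᵢ(p) Φᵢ(z)))` to a product of strips of
the required weighted measure.
-/

open Filter Topology
open scoped ComplexConjugate NNReal

section Polydisc

variable (n : ℕ)

theorem polydisc_eq_ball : polydisc n = ball 0 1 := by
  ext z
  simp [polydisc, pi_norm_lt_iff]

theorem closedPolydisc_eq_closedBall : closedPolydisc n = closedBall 0 1 := by
  ext z
  simp [closedPolydisc, pi_norm_le_iff_of_nonneg]

theorem polydisc_subset_closedPolydisc : polydisc n ⊆ closedPolydisc n :=
  fun _ hz j => (hz j).le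

theorem isOpen_polydisc : IsOpen (polydisc n) :=
  polydisc_eq_ball n ▸ isOpen_ball

theorem convex_polydisc : Convex ℝ (polydisc n) :=
  polydisc_eq_ball n ▸ convex_ball _ _

theorem convex_closedPolydisc : Convex ℝ (closedPolydisc n) :=
  closedPolydisc_eq_closedBall n ▸ convex_closedBall _ _

theorem isCompact_closedPolydisc : IsCompact (closedPolydisc n) :=
  closedPolydisc_eq_closedBall n ▸ isCompact_closedBall _ _

theorem closure_polydisc : closure (polydisc n) = closedPolydisc n := by
  rw [closedPolydisc_eq_closedBall, polydisc_eq_ball, closure_ball _ one_ne_zero]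

theorem uniqueDiffOn_real_closedPolydisc : UniqueDiffOn ℝ (closedPolydisc n) :=
  uniqueDiffOn_convex (convex_closedPolydisc n) ⟨0, (isOpen_polydisc n).subset_interior_iff.2
    (polydisc_subset_closedPolydisc n) fun _ => by simp⟩

theorem uniqueDiffOn_closedPolydisc : UniqueDiffOn ℂ (closedPolydisc n) :=
  (uniqueDiffOn_real_closedPolydisc n).mono_field

end Polydisc

section ContDiffOnClosure

variable {E F : Type*} [NormedAddCommGroup E] [NormedSpace ℂ E] [NormedAddCommGroup F]
  [NormedSpace ℂ F] {f : E → F} {U K : Set E}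

theorem fderivWithin_real_smul_of_differentiableOn (hU : IsOpen U) (hUK : U ⊆ K)
    (hKU : K ⊆ closure U) (hK : UniqueDiffOn ℝ K) (hf : DifferentiableOn ℂ f U)
    (hf' : ContDiffOn ℝ 1 f K) {x : E} (hx : x ∈ K) (c : ℂ) (v : E) :
    fderivWithin ℝ f K x (c • v) = c • fderivWithin ℝ f K x v := by
  have hcont : ContinuousOn (fderivWithin ℝ f K) K := hf'.continuousOn_fderivWithin hK le_rfl
  refine EqOn.of_subset_closure (f := fun x => fderivWithin ℝ f K x (c • v)) (s := U)
    (fun y hy => ?_) (hcont.clm_apply continuousOn_const)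
    ((hcont.clm_apply continuousOn_const).const_smul c) hUK hKU hx
  have hfy : DifferentiableAt ℂ f y := (hf y hy).differentiableAt (hU.mem_nhds hy)
  simp [fderivWithin_of_mem_nhds (mem_of_superset (hU.mem_nhds hy) hUK),
    hfy.fderiv_restrictScalars ℝ]

theorem hasFDerivWithinAt_complex_of_differentiableOn (hU : IsOpen U) (hUK : U ⊆ K)
    (hKU : K ⊆ closure U) (hK : UniqueDiffOn ℝ K) (hf : DifferentiableOn ℂ f U)
    (hf' : ContDiffOn ℝ 1 f K) {x : E} (hx : x ∈ K) :
    ∃ L : E →L[ℂ] F, L.restrictScalars ℝ = fderivWithin ℝ f K x ∧ HasFDerivWithinAt f L K x := by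
  let L : E →L[ℂ] F :=
    { fderivWithin ℝ f K x with
      map_smul' := fderivWithin_real_smul_of_differentiableOn hU hUK hKU hK hf hf' hx }
  have hL : L.restrictScalars ℝ = fderivWithin ℝ f K x := rfl
  exact ⟨L, hL, .of_restrictScalars ℝ
    (hf'.differentiableOn one_ne_zero x hx).hasFDerivWithinAt hL⟩

theorem restrictScalars_fderivWithin_of_differentiableOn (hU : IsOpen U) (hUK : U ⊆ K)
    (hKU : K ⊆ closure U) (hK : UniqueDiffOn ℝ K) (hf : DifferentiableOn ℂ f U)
    (hf' : ContDiffOn ℝ 1 f K) {x : E} (hx : x ∈ K) :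
    (fderivWithin ℂ f K x).restrictScalars ℝ = fderivWithin ℝ f K x := by
  obtain ⟨L, hL, hfL⟩ := hasFDerivWithinAt_complex_of_differentiableOn hU hUK hKU hK hf hf' hx
  rw [hfL.fderivWithin (hK.mono_field x hx), hL]

theorem contDiffOn_complex_one_of_differentiableOn (hU : IsOpen U) (hUK : U ⊆ K)
    (hKU : K ⊆ closure U) (hK : UniqueDiffOn ℝ K) (hf : DifferentiableOn ℂ f U)
    (hf' : ContDiffOn ℝ 1 f K) : ContDiffOn ℂ 1 f K := by
  have hdiff : DifferentiableOn ℂ f K := fun x hx =>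
    let ⟨_, _, hL⟩ := hasFDerivWithinAt_complex_of_differentiableOn hU hUK hKU hK hf hf' hx
    hL.differentiableWithinAt
  have hcont : ContinuousOn (fderivWithin ℂ f K) K := by
    rw [(ContinuousLinearMap.restrictScalarsIsometry ℂ E F ℝ
      ℝ).isometry.isEmbedding.isInducing.continuousOn_iff]
    exact (hf'.continuousOn_fderivWithin hK le_rfl).congr fun x hx =>
      restrictScalars_fderivWithin_of_differentiableOn hU hUK hKU hK hf hf' hx
  simpa using contDiffOn_succ_of_fderivWithin (n := 0) hdiff (by simp) (contDiffOn_zero.2 hcont)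

end ContDiffOnClosure

section NormMax

variable {E F : Type*} [NormedAddCommGroup E] [NormedSpace ℝ E] [NormedAddCommGroup F]
  [InnerProductSpace ℝ F]

theorem inner_fderivWithin_nonpos_of_isMaxOn_norm {f : E → F} {f' : E →L[ℝ] F} {s : Set E}
    {x v : E} (hs : Convex ℝ s) (hf : HasFDerivWithinAt f f' s x) (hmax : IsMaxOn (‖f ·‖) s x)
    (hx : x ∈ s) (hxv : x + v ∈ s) : inner ℝ (f x) (f' v) ≤ 0 := by
  have hsq : IsMaxOn (fun y => ‖f y‖ ^ 2) s x := fun y hy =>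
    pow_le_pow_left₀ (norm_nonneg _) (hmax hy) 2
  have hv : v ∈ posTangentConeAt s x :=
    mem_posTangentConeAt_of_segment_subset (hs.segment_subset hx hxv)
  have : 2 * inner ℝ (f x) (f' v) ≤ 0 := by
    simpa using hsq.localize.hasFDerivWithinAt_nonpos hf.norm_sq hv
  linarith

end NormMax

theorem complex_nonneg_of_forall_re_add_mul_im_nonneg {a : ℂ}
    (h : ∀ s : ℝ, 0 ≤ a.re + s * a.im) : 0 ≤ a.re ∧ a.im = 0 := by
  refine ⟨by simpa using h 0, by_contra fun him => ?_⟩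
  have := h (-(a.re + 1) / a.im)
  rw [div_mul_cancel₀ _ him] at this
  linarith

/-- The complex partial derivative `∂f/∂z_k`, extended to the closed polydisc. -/
def partialDeriv {n : ℕ} (f : (Fin n → ℂ) → ℂ) (k : Fin n) (p : Fin n → ℂ) : ℂ :=
  fderivWithin ℂ f (closedPolydisc n) p (Pi.single k 1)

section BoundaryDerivative

variable {n : ℕ} {f : (Fin n → ℂ) → ℂ} {p z : Fin n → ℂ} {k : Fin n}

theorem hasFDerivWithinAt_closedPolydisc (hf : ContDiffOn ℂ 1 f (closedPolydisc n))
    (hp : p ∈ closedPolydisc n) :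
    HasFDerivWithinAt f (fderivWithin ℂ f (closedPolydisc n) p) (closedPolydisc n) p :=
  (hf.differentiableOn one_ne_zero p hp).hasFDerivWithinAt

theorem fderivWithin_single (c : ℂ) :
    fderivWithin ℂ f (closedPolydisc n) p (Pi.single k c) = c * partialDeriv f k p := by
  rw [partialDeriv, ← smul_eq_mul, ← map_smul, ← Pi.single_smul, smul_eq_mul, mul_one]

theorem fderivWithin_eq_sum_partialDeriv (v : Fin n → ℂ) :
    fderivWithin ℂ f (closedPolydisc n) p v = ∑ k, v k * partialDeriv f k p := by
  conv_lhs => rw [← Finset.univ_sum_single v, map_sum]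
  simp_rw [fderivWithin_single]

theorem re_conj_mul_fderivWithin_nonpos (hf : ContDiffOn ℂ 1 f (closedPolydisc n))
    (hb : ∀ z ∈ closedPolydisc n, ‖f z‖ ≤ 1) (hp : p ∈ closedPolydisc n) (hfp : ‖f p‖ = 1)
    {v : Fin n → ℂ} (hv : p + v ∈ closedPolydisc n) :
    (conj (f p) * fderivWithin ℂ f (closedPolydisc n) p v).re ≤ 0 := by
  have := inner_fderivWithin_nonpos_of_isMaxOn_norm (convex_closedPolydisc n)
    ((hasFDerivWithinAt_closedPolydisc hf hp).restrictScalars ℝ)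
    (fun z hz => (hb z hz).trans hfp.ge) hp hv
  rwa [Complex.inner, mul_comm] at this

theorem conj_mul_partialDeriv_nonneg (hf : ContDiffOn ℂ 1 f (closedPolydisc n))
    (hb : ∀ z ∈ closedPolydisc n, ‖f z‖ ≤ 1) (hp : p ∈ closedPolydisc n) (hfp : ‖f p‖ = 1)
    (hpk : ‖p k‖ = 1) :
    0 ≤ (conj (f p) * (p k * partialDeriv f k p)).re ∧
      (conj (f p) * (p k * partialDeriv f k p)).im = 0 := by
  refine complex_nonneg_of_forall_re_add_mul_im_nonneg fun s => ?_
  set a := conj (f p) * (p k * partialDeriv f k p)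
  -- The direction `c • p_k e_k` points into the closed polydisc, as `‖1 + c‖ ^ 2 = 1 - t`.
  let t : ℝ := (1 + s ^ 2)⁻¹
  have ht : t * (1 + s ^ 2) = 1 := inv_mul_cancel₀ (by positivity)
  have ht0 : 0 < t := by positivity
  let c : ℂ := ⟨-t, t * s⟩
  have hc : ‖1 + c‖ ≤ 1 := by
    rw [← sq_le_one_iff₀ (norm_nonneg _), Complex.sq_norm, Complex.normSq_apply]
    simp only [Complex.add_re, Complex.one_re, Complex.add_im, Complex.one_im, c]
    nlinarith
  have hmem : p + Pi.single k (c * p k) ∈ closedPolydisc n := fun j => by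
    rcases eq_or_ne j k with rfl | hj
    · simpa [← one_add_mul, hpk] using hc
    · simpa [hj] using hp j
  have h := re_conj_mul_fderivWithin_nonpos hf hb hp hfp hmem
  rw [fderivWithin_single, show conj (f p) * (c * p k * partialDeriv f k p) = c * a by ring,
    Complex.mul_re] at h
  have : 0 ≤ t * (a.re + s * a.im) := by linarith
  exact nonneg_of_mul_nonneg_right this ht0

theorem update_mem_closedPolydisc (hz : z ∈ closedPolydisc n) {w : ℂ} (hw : ‖w‖ ≤ 1) :
    Function.update z k w ∈ closedPolydisc n := fun j => by
  rcases eq_or_ne j k with rfl | hj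
  · simpa using hw
  · simpa [hj] using hz j

theorem hasDerivWithinAt_update (hf : ContDiffOn ℂ 1 f (closedPolydisc n))
    (hz : z ∈ closedPolydisc n) :
    HasDerivWithinAt (fun w => f (Function.update z k w)) (partialDeriv f k z)
      (closedBall 0 1) (z k) := by
  have hupd := (hasDerivAt_update z k (z k)).hasDerivWithinAt (s := closedBall 0 1)
  refine HasFDerivWithinAt.comp_hasDerivWithinAt_of_eq (z k)
    (hasFDerivWithinAt_closedPolydisc hf hz) hupd (fun w hw => ?_) (by simp)
  exact update_mem_closedPolydisc hz (by simpa using hw)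

end BoundaryDerivative

/-- The projection of `z` to the face of the closed polydisc containing `p`: the unimodular
coordinates of `p` are kept and the other ones are taken from `z`. -/
def faceProj {n : ℕ} (p z : Fin n → ℂ) : Fin n → ℂ :=
  fun j => if ‖p j‖ = 1 then p j else z j

section Face

variable {n : ℕ} {f : (Fin n → ℂ) → ℂ} {p z : Fin n → ℂ} {k : Fin n}

theorem faceProj_self (p : Fin n → ℂ) : faceProj p p = p := by
  ext j
  simp [faceProj]

theorem faceProj_of_norm_eq_one (hk : ‖p k‖ = 1) : faceProj p z k = p k := if_pos hk

theorem faceProj_of_norm_ne_one (hk : ‖p k‖ ≠ 1) : faceProj p z k = z k := if_neg hk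

theorem faceProj_mem (hz : ∀ j, ‖p j‖ ≠ 1 → ‖z j‖ ≤ 1) : faceProj p z ∈ closedPolydisc n :=
  fun j => by
    by_cases hj : ‖p j‖ = 1
    · rw [faceProj_of_norm_eq_one hj, hj]
    · rw [faceProj_of_norm_ne_one hj]
      exact hz j hj

theorem differentiable_faceProj (p : Fin n → ℂ) : Differentiable ℂ (faceProj p) :=
  differentiable_pi.2 fun j => by
    by_cases hj : ‖p j‖ = 1
    · simp [faceProj, hj]
    · simpa [faceProj, hj] using differentiable_apply j

/-- The maximum principle makes `f` constant on every face on which it is unimodular somewhere. -/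
theorem apply_faceProj (hf : ContDiffOn ℂ 1 f (closedPolydisc n))
    (hb : ∀ z ∈ closedPolydisc n, ‖f z‖ ≤ 1) (hp : p ∈ closedPolydisc n) (hfp : ‖f p‖ = 1)
    (hz : z ∈ closedPolydisc n) : f (faceProj p z) = f p := by
  let c : Fin n → ℂ := fun j => if ‖p j‖ = 1 then 0 else p j
  have hc : c ∈ polydisc n := fun j => by
    by_cases hj : ‖p j‖ = 1
    · simp [c, hj]
    · simpa [c, hj] using (hp j).lt_of_ne hj
  have hpc : faceProj p c = p := by
    ext j
    simp +contextual [faceProj, c]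
  have hmaps : MapsTo (faceProj p) (closedPolydisc n) (closedPolydisc n) := fun w hw =>
    faceProj_mem fun j _ => hw j
  have hd : DifferentiableOn ℂ (f ∘ faceProj p) (closedPolydisc n) :=
    (hf.differentiableOn one_ne_zero).comp (differentiable_faceProj p).differentiableOn hmaps
  have hdiff : DiffContOnCl ℂ (f ∘ faceProj p) (polydisc n) :=
    (hd.mono (closure_polydisc n).subset).diffContOnCl
  have hmax : IsMaxOn (norm ∘ (f ∘ faceProj p)) (polydisc n) c := fun w hw => by
    simpa [hpc, hfp] using hb _ (hmaps (polydisc_subset_closedPolydisc n hw))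
  have := Complex.eqOn_closure_of_isPreconnected_of_isMaxOn_norm
    (convex_polydisc n).isPreconnected (isOpen_polydisc n) hdiff hc hmax
    ((closure_polydisc n).symm.subset hz)
  simpa [hpc] using this

theorem partialDeriv_faceProj_eq_zero (hf : ContDiffOn ℂ 1 f (closedPolydisc n))
    (hb : ∀ z ∈ closedPolydisc n, ‖f z‖ ≤ 1) (hp : p ∈ closedPolydisc n) (hfp : ‖f p‖ = 1)
    (hpk : ‖p k‖ ≠ 1) (hz : z ∈ closedPolydisc n) : partialDeriv f k (faceProj p z) = 0 := by
  have hq : faceProj p z ∈ closedPolydisc n := faceProj_mem fun j _ => hz j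
  have hconst : EqOn (fun w => f (Function.update (faceProj p z) k w)) (fun _ => f p)
      (closedBall 0 1) := fun w hw => by
    have hupd : Function.update (faceProj p z) k w = faceProj p (Function.update z k w) := by
      ext j
      rcases eq_or_ne j k with rfl | hj
      · simp [faceProj_of_norm_ne_one hpk]
      · simp [faceProj, hj]
    simp only [hupd]
    exact apply_faceProj hf hb hp hfp (update_mem_closedPolydisc hz (by simpa using hw))
  have hqk : faceProj p z k ∈ closedBall (0 : ℂ) 1 := by simpa using hq k
  have huniq : UniqueDiffOn ℂ (closedBall (0 : ℂ) 1) := uniqueDiffOn_convex_of_isRCLikeNormedField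
    (convex_closedBall 0 1) (by simp [interior_closedBall])
  exact (huniq _ hqk).eq_deriv _
    (hasDerivWithinAt_update hf hq)
    ((hasDerivWithinAt_const _ _ (f p)).congr hconst (hconst hqk))

end Face

section UniformApproximation

variable {𝕜 E F : Type*} [RCLike 𝕜] [NormedAddCommGroup E] [NormedSpace 𝕜 E] [NormedSpace ℝ E]
  [NormedAddCommGroup F] [NormedSpace 𝕜 F] {f : E → F} {K : Set E}

theorem exists_approximatesLinearOn_fderivWithin (hK : IsCompact K) (hconv : Convex ℝ K)
    (huniq : UniqueDiffOn 𝕜 K) (hf : ContDiffOn 𝕜 1 f K) {ε : ℝ≥0} (hε : 0 < ε) :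
    ∃ δ > 0, ∀ x ∈ K, ApproximatesLinearOn f (fderivWithin 𝕜 f K x) (K ∩ ball x δ) ε := by
  have hcont : UniformContinuousOn (fderivWithin 𝕜 f K) K :=
    hK.uniformContinuousOn_of_continuous (hf.continuousOn_fderivWithin huniq le_rfl)
  obtain ⟨δ, hδ, hclose⟩ := Metric.uniformContinuousOn_iff.1 hcont ε hε
  refine ⟨δ, hδ, fun x hx y hy z hz => ?_⟩
  refine (hconv.inter (convex_ball x δ)).norm_image_sub_le_of_norm_hasFDerivWithin_le'
    (f' := fderivWithin 𝕜 f K) (fun w hw => ?_) (fun w hw => ?_) hz hy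
  · exact ((hf.differentiableOn one_ne_zero w hw.1).hasFDerivWithinAt).mono inter_subset_left
  · exact dist_eq_norm (fderivWithin 𝕜 f K w) _ ▸ (hclose w hw.1 x hx hw.2).le

end UniformApproximation

/-- Directional derivatives up to the boundary depend holomorphically on the base point along
holomorphic curves, being uniform limits of difference quotients. -/
theorem differentiableOn_fderivWithin_comp {E F : Type*} [NormedAddCommGroup E] [NormedSpace ℂ E]
    [NormedAddCommGroup F] [NormedSpace ℂ F] [CompleteSpace F] {f : E → F} {K : Set E}
    (hK : IsCompact K) (hconv : Convex ℝ K) (huniq : UniqueDiffOn ℂ K) (hf : ContDiffOn ℂ 1 f K)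
    {U : Set ℂ} (hU : IsOpen U) {γ : ℂ → E} (hγ : DifferentiableOn ℂ γ U) (hγK : MapsTo γ U K)
    {v : E} (hv : ∀ l ∈ U, γ l + v ∈ K) :
    DifferentiableOn ℂ (fun l => fderivWithin ℂ f K (γ l) v) U := by
  let t : ℕ → ℝ := fun m => 1 / ((m : ℝ) + 1)
  have ht0 (m : ℕ) : 0 < t m := Nat.one_div_pos_of_nat
  have hmem (m : ℕ) : ∀ l ∈ U, γ l + t m • v ∈ K := fun l hl =>
    hconv.add_smul_mem (hγK hl) (hv l hl) ⟨(ht0 m).le, (div_le_one₀ (by positivity)).2 (by simp)⟩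
  have hd := hf.differentiableOn one_ne_zero
  have hquot : ∀ m, DifferentiableOn ℂ (fun l => (t m)⁻¹ • (f (γ l + t m • v) - f (γ l))) U :=
    fun m => ((hd.comp (hγ.add_const _) (hmem m)).sub (hd.comp hγ hγK)).const_smul _
  refine TendstoLocallyUniformlyOn.differentiableOn (φ := atTop)
    (F := fun m l => (t m)⁻¹ • (f (γ l + t m • v) - f (γ l)))
    (TendstoUniformlyOn.tendstoLocallyUniformlyOn ?_) (.of_forall hquot) hU
  rw [Metric.tendstoUniformlyOn_iff]
  intro ε hε
  obtain ⟨η, hη, hηε⟩ := exists_pos_mul_lt hε ‖v‖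
  lift η to ℝ≥0 using hη.le
  obtain ⟨δ, hδ, happrox⟩ := exists_approximatesLinearOn_fderivWithin hK hconv huniq hf hη
  have htv : Tendsto (fun m => t m * ‖v‖) atTop (𝓝 0) := by
    simpa only [zero_mul] using tendsto_one_div_add_atTop_nhds_zero_nat.mul_const ‖v‖
  filter_upwards [htv.eventually_lt_const hδ] with m hm l hl
  have hnorm : ‖t m • v‖ = t m * ‖v‖ := norm_smul_of_nonneg (ht0 m).le v
  have herr := happrox (γ l) (hγK hl) (γ l + t m • v)
    ⟨hmem m l hl, by simpa [hnorm] using hm⟩ (γ l) ⟨hγK hl, mem_ball_self hδ⟩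
  rw [add_sub_cancel_left, hnorm, ContinuousLinearMap.map_smul_of_tower] at herr
  calc dist (fderivWithin ℂ f K (γ l) v) ((t m)⁻¹ • (f (γ l + t m • v) - f (γ l)))
      = (t m)⁻¹ * ‖f (γ l + t m • v) - f (γ l) - t m • fderivWithin ℂ f K (γ l) v‖ := by
        rw [← norm_smul_of_nonneg (inv_nonneg.2 (ht0 m).le), smul_sub _ (_ - _),
          inv_smul_smul₀ (ht0 m).ne', dist_eq_norm']
    _ ≤ (t m)⁻¹ * (η * (t m * ‖v‖)) := by gcongr
    _ = ‖v‖ * η := by field_simp [(ht0 m).ne']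
    _ < ε := hηε

section FaceDerivative

variable {n : ℕ} {f : (Fin n → ℂ) → ℂ} {p z : Fin n → ℂ} {k : Fin n}

theorem continuousOn_partialDeriv (hf : ContDiffOn ℂ 1 f (closedPolydisc n)) :
    ContinuousOn (partialDeriv f k) (closedPolydisc n) :=
  (hf.continuousOn_fderivWithin (uniqueDiffOn_closedPolydisc n) le_rfl).clm_apply continuousOn_const

theorem differentiableOn_partialDeriv_comp (hf : ContDiffOn ℂ 1 f (closedPolydisc n)) {U : Set ℂ}
    (hU : IsOpen U) {γ : ℂ → Fin n → ℂ} (hγ : DifferentiableOn ℂ γ U)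
    (hγK : MapsTo γ U (closedPolydisc n)) {c : ℂ} (hc : ‖c‖ = 1) (hγc : ∀ l ∈ U, γ l k = c) :
    DifferentiableOn ℂ (fun l => partialDeriv f k (γ l)) U := by
  have hc0 : c ≠ 0 := norm_ne_zero_iff.1 (hc ▸ one_ne_zero)
  have hadd : ∀ l ∈ U, γ l + Pi.single k (-c) ∈ closedPolydisc n := fun l hl j => by
    rcases eq_or_ne j k with rfl | hj
    · simp [hγc l hl]
    · simpa [hj] using hγK hl j
  have := differentiableOn_fderivWithin_comp (isCompact_closedPolydisc n) (convex_closedPolydisc n)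
    (uniqueDiffOn_closedPolydisc n) hf hU hγ hγK hadd
  refine (this.const_mul (-c)⁻¹).congr fun l _ => ?_
  rw [fderivWithin_single, inv_mul_cancel_left₀ (neg_ne_zero.2 hc0)]

/-- Along a face on which `f` is constant and unimodular, `conj (f p) * p_k * ∂_k f` is holomorphic
and real, hence constant. -/
theorem partialDeriv_faceProj_eq_faceProj_zero (hf : ContDiffOn ℂ 1 f (closedPolydisc n))
    (hb : ∀ z ∈ closedPolydisc n, ‖f z‖ ≤ 1) (hp : p ∈ closedPolydisc n) (hfp : ‖f p‖ = 1)
    (hpk : ‖p k‖ = 1) (hz : z ∈ closedPolydisc n) :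
    partialDeriv f k (faceProj p z) = partialDeriv f k (faceProj p 0) := by
  let γ : ℂ → Fin n → ℂ := fun l => faceProj p (l • z)
  have hγ : Differentiable ℂ γ :=
    (differentiable_faceProj p).comp (differentiable_id.smul_const z)
  have hlz : ∀ l ∈ closedBall (0 : ℂ) 1, l • z ∈ closedPolydisc n := fun l hl j => by
    simpa using mul_le_one₀ (by simpa using hl) (norm_nonneg _) (hz j)
  have hγK : MapsTo γ (closedBall 0 1) (closedPolydisc n) := fun l hl =>
    faceProj_mem fun j _ => hlz l hl j
  have hγk (l : ℂ) : γ l k = p k := faceProj_of_norm_eq_one hpk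
  have hdiff : DifferentiableOn ℂ (fun l => conj (f p) * (p k * partialDeriv f k (γ l)))
      (ball 0 1) :=
    ((differentiableOn_partialDeriv_comp hf isOpen_ball hγ.differentiableOn
      (hγK.mono_left ball_subset_closedBall) hpk fun l _ => hγk l).const_mul _).const_mul _
  have hreal : ∀ l ∈ ball (0 : ℂ) 1, (conj (f p) * (p k * partialDeriv f k (γ l))).im = 0 :=
    fun l hl => by
      have hl' := ball_subset_closedBall hl
      have hfγ : f (γ l) = f p := apply_faceProj hf hb hp hfp (hlz l hl')
      have := (conj_mul_partialDeriv_nonneg hf hb (hγK hl') (k := k)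
        (by rw [hfγ, hfp]) (by rw [hγk, hpk])).2
      rwa [hfγ, hγk] at this
  obtain ⟨c, hc⟩ := (hdiff.analyticOnNhd isOpen_ball).eq_const_of_im_eq_const hreal isOpen_ball
    ((convex_ball (0 : ℂ) 1).isConnected (nonempty_ball.2 one_pos))
  have hf0 : conj (f p) ≠ 0 := by simp [← norm_ne_zero_iff, hfp]
  have hp0 : p k ≠ 0 := by simp [← norm_ne_zero_iff, hpk]
  have hconst : EqOn (fun l => partialDeriv f k (γ l)) (fun _ => partialDeriv f k (γ 0))
      (ball 0 1) := fun l hl =>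
    mul_left_cancel₀ hp0 <| mul_left_cancel₀ hf0 <|
      (hc l hl).trans (hc 0 (mem_ball_self one_pos)).symm
  have h1 := hconst.of_subset_closure (t := closedBall 0 1)
    ((continuousOn_partialDeriv hf).comp hγ.continuous.continuousOn hγK) continuousOn_const
    ball_subset_closedBall (closure_ball _ one_ne_zero).ge (show (1 : ℂ) ∈ closedBall 0 1 by simp)
  simpa [γ] using h1

theorem partialDeriv_faceProj (hf : ContDiffOn ℂ 1 f (closedPolydisc n))
    (hb : ∀ z ∈ closedPolydisc n, ‖f z‖ ≤ 1) (hp : p ∈ closedPolydisc n) (hfp : ‖f p‖ = 1)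
    (hz : z ∈ closedPolydisc n) : partialDeriv f k (faceProj p z) = partialDeriv f k p := by
  suffices h : ∀ w ∈ closedPolydisc n,
      partialDeriv f k (faceProj p w) = partialDeriv f k (faceProj p 0) by
    rw [h z hz, ← h p hp, faceProj_self]
  intro w hw
  by_cases hpk : ‖p k‖ = 1
  · exact partialDeriv_faceProj_eq_faceProj_zero hf hb hp hfp hpk hw
  · rw [partialDeriv_faceProj_eq_zero hf hb hp hfp hpk hw,
      partialDeriv_faceProj_eq_zero hf hb hp hfp hpk fun j => by simp]

theorem partialDeriv_eq_zero (hf : ContDiffOn ℂ 1 f (closedPolydisc n))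
    (hb : ∀ z ∈ closedPolydisc n, ‖f z‖ ≤ 1) (hp : p ∈ closedPolydisc n) (hfp : ‖f p‖ = 1)
    (hpk : ‖p k‖ ≠ 1) : partialDeriv f k p = 0 :=
  faceProj_self p ▸ partialDeriv_faceProj_eq_zero hf hb hp hfp hpk hp

theorem re_conj_mul_fderivWithin_eq_zero (hf : ContDiffOn ℂ 1 f (closedPolydisc n))
    (hb : ∀ z ∈ closedPolydisc n, ‖f z‖ ≤ 1) (hp : p ∈ closedPolydisc n) (hfp : ‖f p‖ = 1)
    {v : Fin n → ℂ} (hv : ∀ k, ‖p k‖ = 1 → (conj (p k) * v k).re = 0) :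
    (conj (f p) * fderivWithin ℂ f (closedPolydisc n) p v).re = 0 := by
  rw [fderivWithin_eq_sum_partialDeriv, Finset.mul_sum, Complex.re_sum]
  refine Finset.sum_eq_zero fun k _ => ?_
  by_cases hpk : ‖p k‖ = 1
  · have hreal := (conj_mul_partialDeriv_nonneg hf hb hp hfp hpk).2
    have hunit : p k * conj (p k) = 1 := by simp [Complex.mul_conj, Complex.normSq_eq_norm_sq, hpk]
    calc (conj (f p) * (v k * partialDeriv f k p)).re
        = (conj (f p) * (p k * partialDeriv f k p) * (conj (p k) * v k)).re := by
          congr 1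
          linear_combination -(conj (f p) * (v k * partialDeriv f k p)) * hunit
      _ = 0 := by rw [Complex.mul_re, hreal, hv k hpk]; ring
  · simp [partialDeriv_eq_zero hf hb hp hfp hpk]

end FaceDerivative

theorem sq_norm_one_sub_conj_mul_sub_sq_norm_sub (a w : ℂ) :
    ‖1 - conj a * w‖ ^ 2 - ‖w - a‖ ^ 2 = (1 - ‖a‖ ^ 2) * (1 - ‖w‖ ^ 2) := by
  simp only [Complex.sq_norm, Complex.normSq_apply, Complex.sub_re, Complex.sub_im,
    Complex.mul_re, Complex.mul_im, Complex.one_re, Complex.one_im, Complex.conj_re,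
    Complex.conj_im]
  ring

theorem one_sub_norm_le_norm_one_sub_conj_mul {a w : ℂ} (hw : ‖w‖ ≤ 1) :
    1 - ‖a‖ ≤ ‖1 - conj a * w‖ := by
  calc 1 - ‖a‖ ≤ ‖(1 : ℂ)‖ - ‖conj a * w‖ := by
        rw [norm_one, norm_mul, RCLike.norm_conj]
        linarith [mul_le_of_le_one_right (norm_nonneg a) hw]
    _ ≤ ‖1 - conj a * w‖ := norm_sub_norm_le _ _

/-- A form of the Schwarz–Pick lemma: the Schwarz lemma is applied to the composition of `g` with
the Möbius transformation exchanging `g 0` and `0`. -/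
theorem sq_one_sub_norm_mul_le_of_mapsTo_ball {g : ℂ → ℂ} (hd : DifferentiableOn ℂ g (ball 0 1))
    (hg : MapsTo g (ball 0 1) (closedBall 0 1)) {ξ : ℂ} (hξ : ξ ∈ ball (0 : ℂ) 1) :
    (1 - ‖g 0‖) ^ 2 * (1 - ‖ξ‖ ^ 2) ≤ 1 - ‖g ξ‖ ^ 2 := by
  set a := g 0
  have hle {w : ℂ} (hw : w ∈ ball (0 : ℂ) 1) : ‖g w‖ ≤ 1 := by simpa using hg hw
  have hsq {w : ℂ} (hw : w ∈ ball (0 : ℂ) 1) : 0 ≤ 1 - ‖g w‖ ^ 2 :=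
    sub_nonneg.2 (pow_le_one₀ (norm_nonneg _) (hle hw))
  rcases (hle (mem_ball_self one_pos)).eq_or_lt with ha | ha
  · simpa [a, ha] using hsq hξ
  have hden {w : ℂ} (hw : w ∈ ball (0 : ℂ) 1) : 0 < ‖1 - conj a * g w‖ :=
    (sub_pos.2 ha).trans_le (one_sub_norm_le_norm_one_sub_conj_mul (hle hw))
  let h : ℂ → ℂ := fun w => (g w - a) / (1 - conj a * g w)
  have hhd : DifferentiableOn ℂ h (ball 0 1) :=
    (hd.sub_const a).div ((hd.const_mul _).const_sub 1) fun w hw => norm_pos_iff.1 (hden hw)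
  have hh : MapsTo h (ball 0 1) (closedBall 0 1) := fun w hw => by
    rw [mem_closedBall_zero_iff, norm_div, div_le_one (hden hw),
      ← pow_le_pow_iff_left₀ (norm_nonneg _) (norm_nonneg _) two_ne_zero, ← sub_nonneg,
      sq_norm_one_sub_conj_mul_sub_sq_norm_sub]
    exact mul_nonneg (hsq (mem_ball_self one_pos)) (hsq hw)
  have hschwarz : ‖h ξ‖ ≤ ‖ξ‖ :=
    Complex.norm_le_norm_of_mapsTo_ball hhd hh (by simp [h, a]) (by simpa using hξ)
  rw [norm_div, div_le_iff₀ (hden hξ)] at hschwarz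
  have hξ2 : 0 ≤ 1 - ‖ξ‖ ^ 2 :=
    sub_nonneg.2 (pow_le_one₀ (norm_nonneg _) (mem_ball_zero_iff.1 hξ).le)
  calc (1 - ‖a‖) ^ 2 * (1 - ‖ξ‖ ^ 2)
      ≤ ‖1 - conj a * g ξ‖ ^ 2 * (1 - ‖ξ‖ ^ 2) := by
        gcongr
        exact one_sub_norm_le_norm_one_sub_conj_mul (hle hξ)
    _ = ‖1 - conj a * g ξ‖ ^ 2 - (‖ξ‖ * ‖1 - conj a * g ξ‖) ^ 2 := by ring
    _ ≤ ‖1 - conj a * g ξ‖ ^ 2 - ‖g ξ - a‖ ^ 2 := by gcongr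
    _ = (1 - ‖a‖ ^ 2) * (1 - ‖g ξ‖ ^ 2) := sq_norm_one_sub_conj_mul_sub_sq_norm_sub a (g ξ)
    _ ≤ 1 - ‖g ξ‖ ^ 2 := mul_le_of_le_one_left (hsq hξ) (sub_le_self 1 (sq_nonneg _))

section Hopf

variable {n : ℕ} {f : (Fin n → ℂ) → ℂ} {p z : Fin n → ℂ} {k : Fin n}

theorem sq_one_sub_norm_update_mul_le (hf : ContDiffOn ℂ 1 f (closedPolydisc n))
    (hb : ∀ z ∈ closedPolydisc n, ‖f z‖ ≤ 1) (hz : z ∈ closedPolydisc n) (k : Fin n) :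
    (1 - ‖f (Function.update z k 0)‖) ^ 2 * (1 - ‖z k‖ ^ 2) ≤ 1 - ‖f z‖ ^ 2 := by
  rcases (hz k).eq_or_lt with hzk | hzk
  · have := pow_le_one₀ (n := 2) (norm_nonneg _) (hb z hz)
    simpa [hzk] using this
  have hmem : ∀ w ∈ ball (0 : ℂ) 1, Function.update z k w ∈ closedPolydisc n := fun w hw =>
    update_mem_closedPolydisc hz (by simpa using (mem_ball_zero_iff.1 hw).le)
  have hd : DifferentiableOn ℂ (fun w => f (Function.update z k w)) (ball 0 1) :=
    (hf.differentiableOn one_ne_zero).comp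
      (fun w _ => (hasDerivAt_update z k w).differentiableAt.differentiableWithinAt) hmem
  simpa using sq_one_sub_norm_mul_le_of_mapsTo_ball hd
    (fun w hw => mem_closedBall_zero_iff.2 (hb _ (hmem w hw))) (mem_ball_zero_iff.2 hzk)

theorem norm_update_zero_lt_one (hf : ContDiffOn ℂ 1 f (closedPolydisc n))
    (hb : ∀ z ∈ closedPolydisc n, ‖f z‖ ≤ 1) (hp : p ∈ closedPolydisc n)
    (hpk : partialDeriv f k p ≠ 0) : ‖f (Function.update p k 0)‖ < 1 := by
  have hp' : Function.update p k 0 ∈ closedPolydisc n := update_mem_closedPolydisc hp (by simp)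
  refine (hb _ hp').lt_of_ne fun hf1 => hpk ?_
  have hface : faceProj (Function.update p k 0) p = p := by
    ext j
    rcases eq_or_ne j k with rfl | hj <;> simp [faceProj, *]
  rw [← hface]
  exact partialDeriv_faceProj_eq_zero hf hb hp' hf1 (by simp) hp

theorem exists_mul_one_sub_norm_sq_le (hf : ContDiffOn ℂ 1 f (closedPolydisc n))
    (hb : ∀ z ∈ closedPolydisc n, ‖f z‖ ≤ 1) (hp : p ∈ closedPolydisc n)
    (hpk : partialDeriv f k p ≠ 0) :
    ∃ C > 0, ∀ᶠ z in 𝓝[closedPolydisc n] p, 1 - ‖z k‖ ^ 2 ≤ C * (1 - ‖f z‖ ^ 2) := by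
  have hlt := norm_update_zero_lt_one hf hb hp hpk
  obtain ⟨r, hr, hr1⟩ := exists_between hlt
  have hcont : ContinuousOn (fun z => ‖f (Function.update z k 0)‖) (closedPolydisc n) :=
    (hf.continuousOn.comp (by fun_prop)
      fun z hz => update_mem_closedPolydisc hz (by simp)).norm
  have hpos : 0 < (1 - r) ^ 2 := by have := sub_pos.2 hr1; positivity
  refine ⟨((1 - r) ^ 2)⁻¹, inv_pos.2 hpos, ?_⟩
  filter_upwards [(hcont p hp).eventually_lt_const hr, self_mem_nhdsWithin] with z hzr hz
  rw [← div_eq_inv_mul, le_div_iff₀' hpos]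
  refine le_trans ?_ (sq_one_sub_norm_update_mul_le hf hb hz k)
  have hzk : 0 ≤ 1 - ‖z k‖ ^ 2 := sub_nonneg.2 (pow_le_one₀ (norm_nonneg _) (hz k))
  have := sub_pos.2 hr1
  gcongr

end Hopf

/-- The complex Jacobian matrix of `Φ`, extended to the closed polydisc. -/
def jacobian {n : ℕ} (Φ : (Fin n → ℂ) → Fin n → ℂ) (p : Fin n → ℂ) : Matrix (Fin n) (Fin n) ℂ :=
  Matrix.of fun i j => partialDeriv (fun z => Φ z i) j p

/-- The indices of the components of `Φ` that are unimodular at `p`. -/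
def unimodularSet {n : ℕ} (Φ : (Fin n → ℂ) → Fin n → ℂ) (p : Fin n → ℂ) : Set (Fin n) :=
  {i | ‖Φ p i‖ = 1}

theorem linearIndependent_row_iff_rank_eq_card {K m n : Type*} [Field K] [Fintype m] [Fintype n]
    {M : Matrix m n K} : LinearIndependent K M.row ↔ M.rank = Fintype.card m := by
  rw [linearIndependent_iff_card_eq_finrank_span, M.rank_eq_finrank_span_row, eq_comm, Set.finrank]

section Jacobian

variable {n : ℕ} {Φ : (Fin n → ℂ) → Fin n → ℂ} {p : Fin n → ℂ}

theorem jacEntry_eq_jacobian (hhol : DifferentiableOn ℂ Φ (polydisc n))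
    (hsm : ContDiffOn ℝ 1 Φ (closedPolydisc n)) (hp : p ∈ closedPolydisc n) (i j : Fin n) :
    jacEntry n Φ p i j = jacobian Φ p i j := by
  have hU := isOpen_polydisc n
  have hUK := polydisc_subset_closedPolydisc n
  have hKU := (closure_polydisc n).ge
  have hK := uniqueDiffOn_real_closedPolydisc n
  have hd := (contDiffOn_complex_one_of_differentiableOn hU hUK hKU hK hhol hsm).differentiableOn
    one_ne_zero p hp
  have hi := hasFDerivWithinAt_pi'.1 hd.hasFDerivWithinAt i
  rw [jacEntry, ← restrictScalars_fderivWithin_of_differentiableOn hU hUK hKU hK hhol hsm hp,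
    jacobian, Matrix.of_apply, partialDeriv, hi.fderivWithin (uniqueDiffOn_closedPolydisc n p hp)]
  rfl

theorem linearIndepOn_jacobian_of_rankCond (hhol : DifferentiableOn ℂ Φ (polydisc n))
    (hsm : ContDiffOn ℝ 1 Φ (closedPolydisc n)) (hrank : rankCond n Φ) {ζ : Fin n → ℂ}
    (hζ : ζ ∈ torus n) : LinearIndepOn ℂ (jacobian Φ ζ) (unimodularSet Φ ζ) := by
  classical
  rcases (unimodularSet Φ ζ).eq_empty_or_nonempty with hI | hI
  · exact hI ▸ linearIndepOn_empty ℂ _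
  have hmem (i : Fin n) : i ∈ (unimodularSet Φ ζ).toFinset ↔ ‖Φ ζ i‖ = 1 :=
    Set.mem_toFinset
  have h := hrank (unimodularSet Φ ζ).toFinset (by simpa using hI) ζ hζ fun i => (hmem i).1
  rw [← Set.coe_toFinset (unimodularSet Φ ζ)]
  refine linearIndependent_row_iff_rank_eq_card (M := Matrix.of
    fun (i : (unimodularSet Φ ζ).toFinset) j => jacobian Φ ζ i j) |>.2 ?_
  simpa [jacEntry_eq_jacobian hhol hsm fun j => (hζ j).le] using h

theorem linearIndepOn_jacobian (hΦ : ContDiffOn ℂ 1 Φ (closedPolydisc n))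
    (hmaps : MapsTo Φ (closedPolydisc n) (closedPolydisc n))
    (hind : ∀ ζ ∈ torus n, LinearIndepOn ℂ (jacobian Φ ζ) (unimodularSet Φ ζ))
    (hp : p ∈ closedPolydisc n) : LinearIndepOn ℂ (jacobian Φ p) (unimodularSet Φ p) := by
  have h1 : (1 : Fin n → ℂ) ∈ closedPolydisc n := fun j => by simp
  have hζ : faceProj p 1 ∈ torus n := fun j => by
    by_cases hj : ‖p j‖ = 1 <;> simp [faceProj, hj]
  have hsub : unimodularSet Φ p ⊆ unimodularSet Φ (faceProj p 1) := fun i hi => by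
    have hΦi : Φ (faceProj p 1) i = Φ p i := apply_faceProj (f := fun z => Φ z i)
      (contDiffOn_pi.1 hΦ i) (fun z hz => hmaps hz i) hp hi h1
    exact (congrArg norm hΦi).trans hi
  refine (linearIndepOn_congr fun i hi => ?_).1 ((hind _ hζ).mono hsub)
  ext j
  exact partialDeriv_faceProj (contDiffOn_pi.1 hΦ i) (fun z hz => hmaps hz i) hp hi h1

end Jacobian

section RowExtension

variable {K V ι : Type*} [Field K] [AddCommGroup V] [Module K V] {I : Set ι}

theorem exists_linearIndependent_extension_of_basis [Finite ι] (b : Module.Basis ι K V) {v : ι → V}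
    (hv : LinearIndepOn K v I) :
    ∃ w : ι → V, EqOn w v I ∧ (∀ i ∉ I, w i ∈ range b) ∧ LinearIndependent K w := by
  classical
  cases nonempty_fintype ι
  have : Module.Finite K V := .of_basis b
  obtain ⟨c, hcsub, hvc, hspan, hc⟩ :=
    exists_linearIndepOn_id_extension hv.id_image (subset_union_left (t := range b))
  have hc_top : ⊤ ≤ Submodule.span K c := by
    rw [← b.span_eq, Submodule.span_le]
    exact subset_union_right.trans hspan
  have hc_ncard : c.ncard = Fintype.card ι := by
    rw [← Module.finrank_eq_card_basis b, Module.finrank_eq_nat_card_basis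
      (Module.Basis.mk hc (by simpa using hc_top)), Nat.card_coe_set_eq]
  have hc_fin : c.Finite := hc.setFinite
  have hcard : Nat.card (Iᶜ : Set ι) = Nat.card (c \ v '' I : Set V) := by
    rw [Nat.card_coe_set_eq, Nat.card_coe_set_eq, Set.ncard_sdiff hvc,
      hv.injOn.ncard_image, hc_ncard, Set.ncard_compl, Nat.card_eq_fintype_card]
  have : Finite (c \ v '' I : Set V) := hc_fin.sdiff
  let g : (Iᶜ : Set ι) ≃ (c \ v '' I : Set V) :=
    (Finite.equivFinOfCardEq hcard).trans (Finite.equivFin _).symm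
  let w : ι → V := fun i => if h : i ∈ I then v i else g ⟨i, h⟩
  refine ⟨w, fun i hi => dif_pos hi, fun i hi => ?_, ?_⟩
  · rw [show w i = g ⟨i, hi⟩ from dif_neg hi]
    exact (hcsub (g ⟨i, hi⟩).2.1).resolve_left (g ⟨i, hi⟩).2.2
  · refine linearIndependent_of_top_le_span_of_card_eq_finrank (hc_top.trans ?_)
      (Module.finrank_eq_card_basis b).symm
    refine Submodule.span_mono fun x hx => ?_
    by_cases hxI : x ∈ v '' I
    · obtain ⟨i, hi, rfl⟩ := hxI
      exact ⟨i, dif_pos hi⟩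
    · obtain ⟨⟨i, hi⟩, hg⟩ := g.surjective ⟨x, hx, hxI⟩
      exact ⟨i, (dif_neg hi).trans (congrArg Subtype.val hg)⟩

theorem exists_perm_forall_apply_ne_zero {ι R : Type*} [Fintype ι] [DecidableEq ι]
    [CommRing R] {M : Matrix ι ι R} (hM : M.det ≠ 0) :
    ∃ e : Equiv.Perm ι, ∀ i, M i (e i) ≠ 0 := by
  rw [Matrix.det_apply] at hM
  obtain ⟨σ, -, hσ⟩ := Finset.exists_ne_zero_of_sum_ne_zero hM
  refine ⟨σ⁻¹, fun i hi => hσ ?_⟩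
  rw [Finset.prod_eq_zero (Finset.mem_univ (σ⁻¹ i)) (by simpa using hi), smul_zero]

theorem exists_perm_of_linearIndepOn_rows [Fintype ι] {M : Matrix ι ι K}
    (hM : LinearIndepOn K M I) :
    ∃ e : Equiv.Perm ι, (∀ i ∈ I, M i (e i) ≠ 0) ∧
      ∀ a : ι → K, (∀ i ∉ I, a (e i) = 0) → (∀ i ∈ I, M i ⬝ᵥ a = 0) → a = 0 := by
  classical
  obtain ⟨w, hwI, hwC, hw⟩ := exists_linearIndependent_extension_of_basis (Pi.basisFun K ι) hM
  have hunit : IsUnit (Matrix.of w) := Matrix.linearIndependent_rows_iff_isUnit.1 hw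
  obtain ⟨e, he⟩ := exists_perm_forall_apply_ne_zero
    ((Matrix.isUnit_iff_isUnit_det _).1 hunit).ne_zero
  refine ⟨e, fun i hi => hwI hi ▸ he i, fun a haC haI => ?_⟩
  refine Matrix.mulVec_injective_of_isUnit hunit (Eq.trans ?_ (Matrix.mulVec_zero _).symm)
  ext i
  change w i ⬝ᵥ a = 0
  by_cases hi : i ∈ I
  · rw [hwI hi, haI i hi]
  -- The row `w i` is a basis vector whose entry in column `e i` does not vanish.
  · obtain ⟨j, hj⟩ := hwC i hi
    rw [Pi.basisFun_apply] at hj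
    have hij : e i = j := by
      by_contra hne
      exact he i (by rw [Matrix.of_apply, ← hj, Pi.single_eq_of_ne hne])
    rw [← hj, single_one_dotProduct, ← hij, haC i hi]

end RowExtension

section BoundaryChart

variable {n : ℕ} {Φ : (Fin n → ℂ) → Fin n → ℂ} {p v : Fin n → ℂ} {e : Equiv.Perm (Fin n)}
  {i : Fin n}

/-- Real coordinates near a boundary point `p`. A component of `Φ` that is unimodular at `p` has its
own unimodular variable, and contributes the defining function of the disc in that variable
together with its own displacement along the circle; the other variables are kept. -/
def boundaryChart (Φ : (Fin n → ℂ) → Fin n → ℂ) (p : Fin n → ℂ) (e : Equiv.Perm (Fin n))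
    (z : Fin n → ℂ) : Fin n → ℂ :=
  fun i => if ‖Φ p i‖ = 1 then ⟨1 - ‖z (e i)‖ ^ 2, (conj (Φ p i) * Φ z i).im⟩ else z (e i)

theorem boundaryChart_of_norm_eq_one (hi : ‖Φ p i‖ = 1) (z : Fin n → ℂ) :
    boundaryChart Φ p e z i = ⟨1 - ‖z (e i)‖ ^ 2, (conj (Φ p i) * Φ z i).im⟩ :=
  if_pos hi

theorem boundaryChart_of_norm_ne_one (hi : ‖Φ p i‖ ≠ 1) (z : Fin n → ℂ) :
    boundaryChart Φ p e z i = z (e i) :=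
  if_neg hi

theorem contDiffOn_boundaryChart (hΦ : ContDiffOn ℂ 1 Φ (closedPolydisc n)) :
    ContDiffOn ℝ 1 (boundaryChart Φ p e) (closedPolydisc n) := by
  refine contDiffOn_pi.2 fun i => ?_
  by_cases hi : ‖Φ p i‖ = 1
  · simp only [boundaryChart_of_norm_eq_one hi]
    have hΦi : ContDiffOn ℝ 1 (fun z => Φ z i) (closedPolydisc n) :=
      (contDiffOn_pi.1 hΦ i).restrict_scalars ℝ
    have hre : ContDiff ℝ 1 fun z : Fin n → ℂ => 1 - ‖z (e i)‖ ^ 2 :=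
      contDiff_const.sub ((contDiff_apply ℝ ℂ (e i)).norm_sq ℝ)
    have him : ContDiffOn ℝ 1 (fun z => (conj (Φ p i) * Φ z i).im) (closedPolydisc n) :=
      Complex.imCLM.contDiff.comp_contDiffOn (contDiffOn_const.mul hΦi)
    exact Complex.equivRealProdCLM.symm.contDiff.comp_contDiffOn (hre.contDiffOn.prodMk him)
  · simp only [boundaryChart_of_norm_ne_one hi]
    exact (contDiff_apply ℝ ℂ (e i)).contDiffOn

theorem hasFDerivWithinAt_boundaryChart_apply (hΦ : ContDiffOn ℂ 1 Φ (closedPolydisc n))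
    (hp : p ∈ closedPolydisc n) (i : Fin n) :
    HasFDerivWithinAt (fun z => boundaryChart Φ p e z i)
      (ContinuousLinearMap.proj (R := ℝ) i ∘L
        fderivWithin ℝ (boundaryChart Φ p e) (closedPolydisc n) p) (closedPolydisc n) p :=
  hasFDerivWithinAt_pi'.1 ((contDiffOn_boundaryChart hΦ).differentiableOn
    one_ne_zero p hp).hasFDerivWithinAt i

theorem fderivWithin_boundaryChart_of_norm_ne_one (hΦ : ContDiffOn ℂ 1 Φ (closedPolydisc n))
    (hp : p ∈ closedPolydisc n) (hi : ‖Φ p i‖ ≠ 1) :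
    fderivWithin ℝ (boundaryChart Φ p e) (closedPolydisc n) p v i = v (e i) := by
  have h := hasFDerivWithinAt_boundaryChart_apply (e := e) hΦ hp i
  simp only [boundaryChart_of_norm_ne_one hi] at h
  exact DFunLike.congr_fun ((uniqueDiffOn_real_closedPolydisc n p hp).eq h
    (hasFDerivWithinAt_apply (e i) p _)) v

theorem fderivWithin_boundaryChart_re (hΦ : ContDiffOn ℂ 1 Φ (closedPolydisc n))
    (hp : p ∈ closedPolydisc n) (hi : ‖Φ p i‖ = 1) :
    (fderivWithin ℝ (boundaryChart Φ p e) (closedPolydisc n) p v i).re =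
      -(2 * (conj (p (e i)) * v (e i)).re) := by
  have h := Complex.reCLM.hasFDerivAt.comp_hasFDerivWithinAt p
    (hasFDerivWithinAt_boundaryChart_apply (e := e) hΦ hp i)
  have hsq : HasFDerivWithinAt (fun z : Fin n → ℂ => 1 - ‖z (e i)‖ ^ 2) _ (closedPolydisc n) p :=
    (hasFDerivWithinAt_apply (𝕜 := ℝ) (e i) p _).norm_sq.const_sub 1
  have hre : Complex.reCLM ∘ (fun z => boundaryChart Φ p e z i) = fun z => 1 - ‖z (e i)‖ ^ 2 := by
    ext z
    simp only [Function.comp_apply, boundaryChart_of_norm_eq_one hi, Complex.reCLM_apply]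
  rw [hre] at h
  simpa [Complex.inner, mul_comm, mul_add, add_comm] using
    DFunLike.congr_fun ((uniqueDiffOn_real_closedPolydisc n p hp).eq h hsq) v

theorem fderivWithin_boundaryChart_im (hΦ : ContDiffOn ℂ 1 Φ (closedPolydisc n))
    (hp : p ∈ closedPolydisc n) (hi : ‖Φ p i‖ = 1) :
    (fderivWithin ℝ (boundaryChart Φ p e) (closedPolydisc n) p v i).im =
      (conj (Φ p i) * fderivWithin ℂ (fun z => Φ z i) (closedPolydisc n) p v).im := by
  have h := Complex.imCLM.hasFDerivAt.comp_hasFDerivWithinAt p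
    (hasFDerivWithinAt_boundaryChart_apply (e := e) hΦ hp i)
  have hΦi := (hasFDerivWithinAt_closedPolydisc (contDiffOn_pi.1 hΦ i) hp).restrictScalars ℝ
  have him : HasFDerivWithinAt (fun z => (conj (Φ p i) * Φ z i).im) _ (closedPolydisc n) p :=
    Complex.imCLM.hasFDerivAt.comp_hasFDerivWithinAt p (hΦi.const_mul (conj (Φ p i)))
  have hchart : Complex.imCLM ∘ (fun z => boundaryChart Φ p e z i) =
      fun z => (conj (Φ p i) * Φ z i).im := by
    ext z
    simp only [Function.comp_apply, boundaryChart_of_norm_eq_one hi, Complex.imCLM_apply]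
  rw [hchart] at h
  exact DFunLike.congr_fun ((uniqueDiffOn_real_closedPolydisc n p hp).eq h him) v

theorem fderivWithin_boundaryChart_eq_zero_iff (hΦ : ContDiffOn ℂ 1 Φ (closedPolydisc n))
    (hmaps : MapsTo Φ (closedPolydisc n) (closedPolydisc n)) (hp : p ∈ closedPolydisc n)
    (hker : ∀ a : Fin n → ℂ, (∀ i ∉ unimodularSet Φ p, a (e i) = 0) →
      (∀ i ∈ unimodularSet Φ p, jacobian Φ p i ⬝ᵥ a = 0) → a = 0) :
    fderivWithin ℝ (boundaryChart Φ p e) (closedPolydisc n) p v = 0 ↔ v = 0 := by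
  refine ⟨fun hv => ?_, fun hv => by rw [hv, map_zero]⟩
  have hvI : ∀ i ∉ unimodularSet Φ p, v (e i) = 0 := fun i hi => by
    rw [← fderivWithin_boundaryChart_of_norm_ne_one (e := e) (v := v) hΦ hp hi, hv, Pi.zero_apply]
  have htangent : ∀ k, ‖p k‖ = 1 → (conj (p k) * v k).re = 0 := fun k _ => by
    obtain ⟨i, rfl⟩ := e.surjective k
    by_cases hi : ‖Φ p i‖ = 1
    · have := fderivWithin_boundaryChart_re (e := e) (v := v) hΦ hp hi
      rw [hv, Pi.zero_apply, Complex.zero_re] at this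
      linarith
    · rw [hvI i hi, mul_zero, Complex.zero_re]
  refine hker v hvI fun i hi => ?_
  have hderiv : conj (Φ p i) * fderivWithin ℂ (fun z => Φ z i) (closedPolydisc n) p v = 0 := by
    refine Complex.ext (re_conj_mul_fderivWithin_eq_zero (f := fun z => Φ z i)
      (contDiffOn_pi.1 hΦ i) (fun z hz => hmaps hz i) hp hi htangent) ?_
    rw [← fderivWithin_boundaryChart_im (e := e) hΦ hp hi, hv, Pi.zero_apply]
  have hne : conj (Φ p i) ≠ 0 := norm_ne_zero_iff.1 (by simp [show ‖Φ p i‖ = 1 from hi])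
  rw [dotProduct_comm]
  exact (fderivWithin_eq_sum_partialDeriv v).symm.trans ((mul_eq_zero.1 hderiv).resolve_left hne)

end BoundaryChart

theorem exists_map_restrict_inter_ball_le {E : Type*} [NormedAddCommGroup E] [NormedSpace ℝ E]
    [FiniteDimensional ℝ E] [MeasurableSpace E] [BorelSpace E] (μ : Measure E)
    [μ.IsAddHaarMeasure] {F : E → E} {K : Set E} {p : E} (hK : IsCompact K) (hconv : Convex ℝ K)
    (huniq : UniqueDiffOn ℝ K) (hF : ContDiffOn ℝ 1 F K) (hp : p ∈ K)
    (hinj : Function.Injective (fderivWithin ℝ F K p)) :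
    ∃ C : ℝ≥0, ∃ ε > 0, Measure.map F (μ.restrict (K ∩ ball p ε)) ≤ C • μ := by
  have hdet : (fderivWithin ℝ F K p).det ≠ 0 := fun h =>
    (LinearMap.bot_lt_ker_of_det_eq_zero h).ne' (LinearMap.ker_eq_bot.2 hinj)
  obtain ⟨m, hm, hmdet⟩ :=
    ENNReal.lt_iff_exists_nnreal_btwn.1 (ENNReal.ofReal_pos.2 (abs_pos.2 hdet))
  obtain ⟨δ, himage, hδ⟩ :=
    ((mul_le_addHaar_image_of_lt_det μ (fderivWithin ℝ F K p) hmdet).and self_mem_nhdsWithin).exists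
  obtain ⟨ε, hε, happrox⟩ := exists_approximatesLinearOn_fderivWithin hK hconv huniq hF hδ
  refine ⟨m⁻¹, ε, hε, Measure.le_iff.2 fun B hB => ?_⟩
  have hKε : MeasurableSet (K ∩ ball p ε) := hK.measurableSet.inter measurableSet_ball
  rw [Measure.map_apply_of_aemeasurable
    ((hF.continuousOn.mono inter_subset_left).aemeasurable hKε) hB, Measure.restrict_apply' hKε]
  have hm0 : m ≠ 0 := by simpa using hm.ne'
  rw [Measure.smul_apply, ENNReal.smul_def, smul_eq_mul, ENNReal.coe_inv hm0,
    ← ENNReal.div_eq_inv_mul, ENNReal.le_div_iff_mul_le (by simp [hm0]) (by simp), mul_comm]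
  calc m * μ (F ⁻¹' B ∩ (K ∩ ball p ε)) ≤ μ (F '' (F ⁻¹' B ∩ (K ∩ ball p ε))) :=
        himage _ F ((happrox p hp).mono_set inter_subset_right)
    _ ≤ μ B := measure_mono (image_subset_iff.2 inter_subset_left)

theorem lintegral_pi_prod_eq_prod_lintegral {n : ℕ} {α : Fin n → Type*}
    [∀ i, MeasurableSpace (α i)] (μ : ∀ i, Measure (α i)) [∀ i, SigmaFinite (μ i)]
    {g : ∀ i, α i → ℝ≥0∞} (hg : ∀ i, Measurable (g i)) :
    ∫⁻ z, ∏ i, g i (z i) ∂Measure.pi μ = ∏ i, ∫⁻ w, g i w ∂μ i := by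
  induction n with
  | zero => simp
  | succ n ih =>
    have htail : Measurable fun y : ∀ i : Fin n, α i.succ => ∏ i, g i.succ (y i) :=
      Finset.measurable_fun_prod _ fun i _ => (hg i.succ).comp (measurable_pi_apply i)
    calc ∫⁻ z, ∏ i, g i (z i) ∂Measure.pi μ
        = ∫⁻ q : α 0 × (∀ i : Fin n, α i.succ), g 0 q.1 * ∏ i, g i.succ (q.2 i)
            ∂(μ 0).prod (Measure.pi fun i : Fin n => μ i.succ) :=
          (lintegral_congr fun z => Fin.prod_univ_succ _).trans
            ((measurePreserving_piFinSuccAbove μ 0).lintegral_comp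
              (((hg 0).comp measurable_fst).mul (htail.comp measurable_snd)))
      _ = ∏ i, ∫⁻ w, g i w ∂μ i := by
          rw [lintegral_prod_mul (hg 0).aemeasurable htail.aemeasurable,
            ih _ fun i => hg i.succ, Fin.prod_univ_succ]

/-- The density of `dA_β` with respect to Lebesgue measure on `ℂ`. -/
def discWeight (β : ℝ) : ℂ → ℝ≥0∞ :=
  (ball 0 1).indicator fun w => ENNReal.ofReal ((β + 1) * (1 - ‖w‖ ^ 2) ^ β / Real.pi)

theorem measurable_discWeight (β : ℝ) : Measurable (discWeight β) :=
  Measurable.indicator (by fun_prop) measurableSet_ball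

theorem discWeight_of_norm_lt_one {w : ℂ} (hw : ‖w‖ < 1) (β : ℝ) :
    discWeight β w = ENNReal.ofReal ((β + 1) * (1 - ‖w‖ ^ 2) ^ β / Real.pi) :=
  indicator_of_mem (mem_ball_zero_iff.2 hw) _

theorem discWeight_of_one_le_norm {w : ℂ} (hw : 1 ≤ ‖w‖) (β : ℝ) : discWeight β w = 0 :=
  indicator_of_notMem (by simpa using hw) _

theorem one_sub_norm_sq_pos {E : Type*} [SeminormedAddCommGroup E] {w : E} (hw : ‖w‖ < 1) :
    0 < 1 - ‖w‖ ^ 2 :=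
  sub_pos.2 (pow_lt_one₀ (norm_nonneg w) hw two_ne_zero)

theorem lintegral_discWeight_lt_top {β : ℝ} (hβ : -1 < β) : ∫⁻ w, discWeight β w < ∞ := by
  have hβ1 : 0 < β + 1 := by linarith
  have hsq {r : ℝ} (hr : r ∈ Ioo (0 : ℝ) 1) : 0 < 1 - r ^ 2 := by
    have := pow_lt_one₀ hr.1.le hr.2 two_ne_zero
    linarith
  have hcont : ContinuousOn (fun r : ℝ => -(1 - r ^ 2) ^ (β + 1) / (2 * Real.pi)) (Icc 0 1) :=
    (((by fun_prop : Continuous fun r : ℝ => 1 - r ^ 2).rpow_const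
      fun _ => Or.inr hβ1.le).neg.div_const _).continuousOn
  have hderiv : ∀ r ∈ Ioo (0 : ℝ) 1, HasDerivAt
      (fun r : ℝ => -(1 - r ^ 2) ^ (β + 1) / (2 * Real.pi))
      (r ^ (Module.finrank ℝ ℂ - 1) • ((β + 1) * (1 - r ^ 2) ^ β / Real.pi)) r := fun r hr => by
    have h := (((hasDerivAt_pow 2 r).const_sub 1).rpow_const (p := β + 1)
      (Or.inl (hsq hr).ne')).neg.div_const (2 * Real.pi)
    refine h.congr_deriv ?_
    rw [Complex.finrank_real_complex, add_sub_cancel_right, smul_eq_mul]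
    push_cast
    field
  have hinteg := intervalIntegral.integrableOn_deriv_of_nonneg hcont hderiv fun r hr => by
    have := hr.1
    have := hsq hr
    positivity
  rw [discWeight, lintegral_indicator measurableSet_ball]
  exact ((integrableOn_fun_norm_addHaar volume).2
    (hinteg.mono_set Ioo_subset_Ioc_self)).lintegral_lt_top

theorem Vbeta_eq_withDensity_prod_discWeight (n : ℕ) {β : ℝ} (hβ : -1 < β) :
    Vbeta n β = volume.withDensity fun z => ∏ j, discWeight β (z j) := by
  have hβ1 : 0 < β + 1 := by linarith
  rw [Vbeta, ← withDensity_indicator (isOpen_polydisc n).measurableSet]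
  congr 1
  ext z
  by_cases hz : z ∈ polydisc n
  · rw [indicator_of_mem hz, ENNReal.ofReal_prod_of_nonneg fun j _ => by
      have := one_sub_norm_sq_pos (hz j)
      positivity]
    exact Finset.prod_congr rfl fun j _ => (discWeight_of_norm_lt_one (hz j) β).symm
  · obtain ⟨j, hj⟩ := not_forall.1 hz
    rw [indicator_of_notMem hz,
      Finset.prod_eq_zero (Finset.mem_univ j) (discWeight_of_one_le_norm (not_lt.1 hj) β)]

theorem lintegral_Vbeta {n : ℕ} {β : ℝ} (hβ : -1 < β) {F : (Fin n → ℂ) → ℝ≥0∞}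
    (hF : Measurable F) :
    ∫⁻ z, F z ∂Vbeta n β = ∫⁻ z, (∏ j, discWeight β (z j)) * F z := by
  have hdensity : Measurable fun z : Fin n → ℂ => ∏ j, discWeight β (z j) :=
    Finset.measurable_fun_prod _ fun j _ => (measurable_discWeight β).comp (measurable_pi_apply j)
  rw [Vbeta_eq_withDensity_prod_discWeight n hβ]
  exact lintegral_withDensity_eq_lintegral_mul _ hdensity hF

theorem ae_Vbeta_mem_polydisc (n : ℕ) (β : ℝ) : ∀ᵐ z ∂Vbeta n β, z ∈ polydisc n :=
  (withDensity_absolutelyContinuous _ _).ae_le (ae_restrict_mem (isOpen_polydisc n).measurableSet)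

/-- The density of `dA_β` in the coordinates `(1 - |z|², y)`, cut off to the box
`(0, c] × (v - d, v + d)`. -/
def stripWeight (β c v d : ℝ) (w : ℂ) : ℝ≥0∞ :=
  (Ioc 0 c).indicator (fun x => ENNReal.ofReal ((β + 1) * x ^ β / Real.pi)) w.re *
    (Ioo (v - d) (v + d)).indicator 1 w.im

section StripWeight

variable {β c : ℝ}

theorem measurable_indicator_Ioc_rpow (β c : ℝ) : Measurable
    ((Ioc 0 c).indicator fun x : ℝ => ENNReal.ofReal ((β + 1) * x ^ β / Real.pi)) :=
  Measurable.indicator (by fun_prop) measurableSet_Ioc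

theorem measurable_stripWeight (β c v d : ℝ) : Measurable (stripWeight β c v d) :=
  ((measurable_indicator_Ioc_rpow β c).comp Complex.measurable_re).mul
    ((measurable_one.indicator measurableSet_Ioo).comp Complex.measurable_im)

theorem lintegral_Ioc_rpow (hβ : -1 < β) (hc : 0 ≤ c) :
    ∫⁻ x in Ioc 0 c, ENNReal.ofReal ((β + 1) * x ^ β / Real.pi) =
      ENNReal.ofReal (c ^ (β + 1) / Real.pi) := by
  have hβ1 : 0 < β + 1 := by linarith
  have hinteg : IntervalIntegrable (fun x : ℝ => (β + 1) * x ^ β / Real.pi) volume 0 c :=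
    ((intervalIntegral.intervalIntegrable_rpow' hβ).const_mul _).div_const _
  rw [← ofReal_integral_eq_lintegral_ofReal, ← intervalIntegral.integral_of_le hc,
    intervalIntegral.integral_div, intervalIntegral.integral_const_mul,
    integral_rpow (Or.inl hβ), Real.zero_rpow hβ1.ne', sub_zero, mul_div_cancel₀ _ hβ1.ne']
  · exact (intervalIntegrable_iff_integrableOn_Ioc_of_le hc).1 hinteg
  · filter_upwards [ae_restrict_mem measurableSet_Ioc] with x hx
    have := hx.1
    simp only [Pi.zero_apply]
    positivity

theorem lintegral_stripWeight (hβ : -1 < β) (hc : 0 ≤ c) (v d : ℝ) :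
    ∫⁻ w, stripWeight β c v d w =
      ENNReal.ofReal (c ^ (β + 1) / Real.pi) * ENNReal.ofReal (2 * d) := by
  calc ∫⁻ w, stripWeight β c v d w
      = ∫⁻ q : ℝ × ℝ, (Ioc 0 c).indicator
            (fun x => ENNReal.ofReal ((β + 1) * x ^ β / Real.pi)) q.1 *
          (Ioo (v - d) (v + d)).indicator 1 q.2 :=
        Complex.volume_preserving_equiv_real_prod.lintegral_comp
          (((measurable_indicator_Ioc_rpow β c).comp measurable_fst).mul
            ((measurable_one.indicator measurableSet_Ioo).comp measurable_snd))
    _ = ENNReal.ofReal (c ^ (β + 1) / Real.pi) * ENNReal.ofReal (2 * d) := by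
        rw [Measure.volume_eq_prod, lintegral_prod_mul
            (measurable_indicator_Ioc_rpow β c).aemeasurable
            (measurable_one.indicator measurableSet_Ioo).aemeasurable,
          lintegral_indicator measurableSet_Ioc, lintegral_Ioc_rpow hβ hc,
          lintegral_indicator_one measurableSet_Ioo, Real.volume_Ioo]
        ring_nf

end StripWeight

/-- The polydisc with centre `u` and radii `1 - |u_i|²`, on which measures are tested in the
Carleson condition. -/
def carlesonBox {n : ℕ} (u : Fin n → ℂ) : Set (Fin n → ℂ) :=
  {w | ∀ i, ‖w i - u i‖ < 1 - ‖u i‖ ^ 2}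

theorem isOpen_carlesonBox {n : ℕ} (u : Fin n → ℂ) : IsOpen (carlesonBox u) := by
  simp only [carlesonBox, ofPred_forall]
  exact isOpen_iInter_of_finite fun i => isOpen_lt (by fun_prop) continuous_const

theorem measurableSet_inter_preimage_of_continuousOn {X Y : Type*} [TopologicalSpace X]
    [MeasurableSpace X] [OpensMeasurableSpace X] [TopologicalSpace Y] {f : X → Y} {K : Set X}
    {B : Set Y} (hf : ContinuousOn f K) (hK : MeasurableSet K) (hB : IsOpen B) :
    MeasurableSet (K ∩ f ⁻¹' B) := by
  obtain ⟨U, hU, hUB⟩ := continuousOn_iff'.1 hf B hB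
  rw [inter_comm, hUB]
  exact hU.measurableSet.inter hK

theorem one_sub_norm_sq_le_of_norm_sub_lt {E : Type*} [SeminormedAddCommGroup E] {u w : E}
    (hu : ‖u‖ ≤ 1) (hwu : ‖w - u‖ < 1 - ‖u‖ ^ 2) : 1 - ‖w‖ ^ 2 ≤ 4 * (1 - ‖u‖ ^ 2) := by
  have h := norm_sub_norm_le u w
  rw [norm_sub_rev] at h
  nlinarith [sq_nonneg (1 - ‖w‖), mul_nonneg (norm_nonneg u) (sub_nonneg.2 hu)]

section ChartMajorant

variable {β c : ℝ}

/-- A majorant, in one coordinate of a boundary chart at `p`, of the density of `dA_β` over the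
preimage of a Carleson box about `u`. Here `a = Φ_i(p)`; when `|a| < 1` such boxes are
bounded below in size, and the constant factor makes the integral comparable to that of a small box
all the same. -/
def chartMajorant (β c : ℝ) (a u : ℂ) : ℂ → ℝ≥0∞ :=
  if ‖a‖ = 1 then stripWeight β (c * (1 - ‖u‖ ^ 2)) (conj a * u).im (1 - ‖u‖ ^ 2)
  else fun w => ENNReal.ofReal ((c * (1 - ‖u‖ ^ 2)) ^ (2 + β)) * discWeight β w

theorem measurable_chartMajorant (β c : ℝ) (a u : ℂ) : Measurable (chartMajorant β c a u) := by
  unfold chartMajorant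
  split_ifs
  · exact measurable_stripWeight ..
  · exact (measurable_discWeight β).const_mul _

theorem exists_lintegral_chartMajorant_le (hβ : -1 < β) (hc : 0 ≤ c) (a : ℂ) :
    ∃ D : ℝ≥0, ∀ u : ℂ, ‖u‖ < 1 →
      ∫⁻ w, chartMajorant β c a u w ≤ D * ENNReal.ofReal ((1 - ‖u‖ ^ 2) ^ (2 + β)) := by
  by_cases ha : ‖a‖ = 1
  · refine ⟨(2 * c ^ (β + 1) / Real.pi).toNNReal, fun u hu => le_of_eq ?_⟩
    have hδ := one_sub_norm_sq_pos hu
    rw [chartMajorant, if_pos ha, lintegral_stripWeight hβ (by positivity),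
      ← ENNReal.ofReal_mul (by positivity), ENNReal.ofNNReal_toNNReal,
      ← ENNReal.ofReal_mul (by positivity), Real.mul_rpow hc hδ.le,
      show 2 + β = β + 1 + 1 by ring, Real.rpow_add_one hδ.ne' (β + 1)]
    ring_nf
  · refine ⟨(c ^ (2 + β)).toNNReal * (∫⁻ w, discWeight β w).toNNReal, fun u hu => le_of_eq ?_⟩
    have hδ := one_sub_norm_sq_pos hu
    simp only [chartMajorant, if_neg ha]
    rw [lintegral_const_mul _ (measurable_discWeight β), Real.mul_rpow hc hδ.le,
      ENNReal.ofReal_mul (by positivity), ENNReal.coe_mul, ENNReal.ofNNReal_toNNReal,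
      ENNReal.coe_toNNReal (lintegral_discWeight_lt_top hβ).ne]
    ring

theorem discWeight_le_chartMajorant {n : ℕ} {Φ : (Fin n → ℂ) → Fin n → ℂ} {p z : Fin n → ℂ}
    {u : ℂ} {e : Equiv.Perm (Fin n)} {i : Fin n} (hβ : -1 < β)
    (hz : (if ‖Φ p i‖ = 1 then 1 - ‖z (e i)‖ ^ 2 else 1) ≤ c * (1 - ‖u‖ ^ 2))
    (hzu : ‖Φ z i - u‖ < 1 - ‖u‖ ^ 2) :
    discWeight β (z (e i)) ≤ chartMajorant β c (Φ p i) u (boundaryChart Φ p e z i) := by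
  rcases lt_or_ge ‖z (e i)‖ 1 with hlt | hge
  swap
  · exact (discWeight_of_one_le_norm hge β).trans_le zero_le
  by_cases hi : ‖Φ p i‖ = 1
  · rw [if_pos hi] at hz
    have him : (conj (Φ p i) * Φ z i).im ∈ Ioo ((conj (Φ p i) * u).im - (1 - ‖u‖ ^ 2))
        ((conj (Φ p i) * u).im + (1 - ‖u‖ ^ 2)) := by
      rw [← Real.ball_eq_Ioo, mem_ball, Real.dist_eq, ← Complex.sub_im, ← mul_sub]
      refine (Complex.abs_im_le_norm _).trans_lt ?_
      rwa [norm_mul, RCLike.norm_conj, hi, one_mul]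
    rw [chartMajorant, if_pos hi, boundaryChart_of_norm_eq_one hi, stripWeight,
      indicator_of_mem (show 1 - ‖z (e i)‖ ^ 2 ∈ Ioc 0 _ from ⟨one_sub_norm_sq_pos hlt, hz⟩),
      indicator_of_mem him, Pi.one_apply, mul_one, discWeight_of_norm_lt_one hlt]
  · rw [if_neg hi] at hz
    rw [chartMajorant, if_neg hi, boundaryChart_of_norm_ne_one hi]
    refine le_mul_of_one_le_left zero_le ?_
    rw [ENNReal.one_le_ofReal]
    exact Real.one_le_rpow hz (by linarith)

end ChartMajorant

section Carleson

variable {n : ℕ} {Φ : (Fin n → ℂ) → Fin n → ℂ} {p : Fin n → ℂ}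

theorem exists_one_sub_norm_sq_le_uniformly (hΦ : ContDiffOn ℂ 1 Φ (closedPolydisc n))
    (hmaps : MapsTo Φ (closedPolydisc n) (closedPolydisc n)) (hp : p ∈ closedPolydisc n)
    {e : Equiv.Perm (Fin n)} (he : ∀ i ∈ unimodularSet Φ p, jacobian Φ p i (e i) ≠ 0) :
    ∃ c > 0, ∀ᶠ z in 𝓝[closedPolydisc n] p, ∀ i,
      (if ‖Φ p i‖ = 1 then 1 - ‖z (e i)‖ ^ 2 else 1) ≤ c * (1 - ‖Φ z i‖ ^ 2) := by
  have hcoord : ∀ i, ∃ c > 0, ∀ᶠ z in 𝓝[closedPolydisc n] p,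
      (if ‖Φ p i‖ = 1 then 1 - ‖z (e i)‖ ^ 2 else 1) ≤ c * (1 - ‖Φ z i‖ ^ 2) := fun i => by
    have hΦi := contDiffOn_pi.1 hΦ i
    by_cases hi : ‖Φ p i‖ = 1
    · simp only [if_pos hi]
      exact exists_mul_one_sub_norm_sq_le hΦi (fun z hz => hmaps hz i) hp (he i hi)
    · simp only [if_neg hi]
      obtain ⟨r, hr, hr'⟩ :=
        exists_between (one_sub_norm_sq_pos (lt_of_le_of_ne (hmaps hp i) hi))
      refine ⟨r⁻¹, inv_pos.2 hr, ?_⟩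
      have hcont : ContinuousOn (fun z => 1 - ‖Φ z i‖ ^ 2) (closedPolydisc n) :=
        continuousOn_const.sub (hΦi.continuousOn.norm.pow 2)
      filter_upwards [(hcont p hp).eventually_const_lt hr'] with z hz
      rw [← div_eq_inv_mul]
      exact (one_le_div hr).2 hz.le
  choose c hc hle using hcoord
  have hcsum : 0 ≤ ∑ i, c i := Finset.sum_nonneg fun i _ => (hc i).le
  refine ⟨∑ i, c i + 1, by positivity, ?_⟩
  filter_upwards [eventually_all.2 hle, self_mem_nhdsWithin] with z hz hzK i
  have hΦz : 0 ≤ 1 - ‖Φ z i‖ ^ 2 := sub_nonneg.2 (pow_le_one₀ (norm_nonneg _) (hmaps hzK i))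
  refine (hz i).trans (mul_le_mul_of_nonneg_right ?_ hΦz)
  linarith [Finset.single_le_sum (f := c) (fun j _ => (hc j).le) (Finset.mem_univ i)]

theorem exists_lintegral_comp_boundaryChart_le (hΦ : ContDiffOn ℂ 1 Φ (closedPolydisc n))
    (hmaps : MapsTo Φ (closedPolydisc n) (closedPolydisc n)) (hp : p ∈ closedPolydisc n)
    {e : Equiv.Perm (Fin n)}
    (hker : ∀ a : Fin n → ℂ, (∀ i ∉ unimodularSet Φ p, a (e i) = 0) →
      (∀ i ∈ unimodularSet Φ p, jacobian Φ p i ⬝ᵥ a = 0) → a = 0) :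
    ∃ C : ℝ≥0, ∃ ε > 0, ∀ G : (Fin n → ℂ) → ℝ≥0∞, Measurable G →
      ∫⁻ z in closedPolydisc n ∩ ball p ε, G (boundaryChart Φ p e z) ≤ C * ∫⁻ w, G w := by
  have hK := isCompact_closedPolydisc n
  have hF : ContDiffOn ℝ 1 (boundaryChart Φ p e) (closedPolydisc n) := contDiffOn_boundaryChart hΦ
  obtain ⟨C, ε, hε, hle⟩ := exists_map_restrict_inter_ball_le volume hK (convex_closedPolydisc n)
    (uniqueDiffOn_real_closedPolydisc n) hF hp <| (injective_iff_map_eq_zero _).2 fun _ =>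
      (fderivWithin_boundaryChart_eq_zero_iff hΦ hmaps hp hker).1
  refine ⟨C, ε, hε, fun G hG => ?_⟩
  have hmeas : AEMeasurable (boundaryChart Φ p e)
      (volume.restrict (closedPolydisc n ∩ ball p ε)) :=
    (hF.continuousOn.mono inter_subset_left).aemeasurable
      (hK.measurableSet.inter measurableSet_ball)
  calc ∫⁻ z in closedPolydisc n ∩ ball p ε, G (boundaryChart Φ p e z)
      = ∫⁻ w, G w ∂(volume.restrict (closedPolydisc n ∩ ball p ε)).map (boundaryChart Φ p e) :=
        (lintegral_map' hG.aemeasurable hmeas).symm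
    _ ≤ ∫⁻ w, G w ∂(C • volume) := lintegral_mono' hle le_rfl
    _ = C * ∫⁻ w, G w := lintegral_smul_measure _ _

theorem exists_prod_discWeight_le_prod_chartMajorant (hΦ : ContDiffOn ℂ 1 Φ (closedPolydisc n))
    (hmaps : MapsTo Φ (closedPolydisc n) (closedPolydisc n)) (hp : p ∈ closedPolydisc n)
    {e : Equiv.Perm (Fin n)} (he : ∀ i ∈ unimodularSet Φ p, jacobian Φ p i (e i) ≠ 0) {β : ℝ}
    (hβ : -1 < β) :
    ∃ c > 0, ∃ ε > 0, ∀ u ∈ polydisc n,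
      ∀ z ∈ closedPolydisc n ∩ Φ ⁻¹' carlesonBox u ∩ ball p ε,
        ∏ j, discWeight β (z j) ≤
          ∏ i, chartMajorant β c (Φ p i) (u i) (boundaryChart Φ p e z i) := by
  obtain ⟨c, hc, hle⟩ := exists_one_sub_norm_sq_le_uniformly hΦ hmaps hp he
  obtain ⟨ε, hε, hle⟩ := Metric.mem_nhdsWithin_iff.1 hle
  refine ⟨c * 4, by positivity, ε, hε, fun u hu z ⟨⟨hzK, hzu⟩, hzp⟩ => ?_⟩
  rw [← Equiv.prod_comp e]
  refine Finset.prod_le_prod' fun i _ => discWeight_le_chartMajorant hβ ?_ (hzu i)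
  refine (hle ⟨hzp, hzK⟩ i).trans ?_
  rw [mul_assoc]
  exact mul_le_mul_of_nonneg_left (one_sub_norm_sq_le_of_norm_sub_lt (hu i).le (hzu i)) hc.le

theorem exists_Vbeta_inter_preimage_carlesonBox_inter_ball_le
    (hΦ : ContDiffOn ℂ 1 Φ (closedPolydisc n))
    (hmaps : MapsTo Φ (closedPolydisc n) (closedPolydisc n)) (hp : p ∈ closedPolydisc n)
    (hind : LinearIndepOn ℂ (jacobian Φ p) (unimodularSet Φ p)) {β : ℝ} (hβ : -1 < β) :
    ∃ C : ℝ≥0, ∃ ε > 0, ∀ u ∈ polydisc n,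
      Vbeta n β (closedPolydisc n ∩ Φ ⁻¹' carlesonBox u ∩ ball p ε) ≤
        C * ∏ i, ENNReal.ofReal ((1 - ‖u i‖ ^ 2) ^ (2 + β)) := by
  obtain ⟨e, he, hker⟩ := exists_perm_of_linearIndepOn_rows hind
  obtain ⟨c, hc, ε₁, hε₁, hdensity⟩ :=
    exists_prod_discWeight_le_prod_chartMajorant hΦ hmaps hp he hβ
  obtain ⟨C, ε₂, hε₂, hchart⟩ := exists_lintegral_comp_boundaryChart_le hΦ hmaps hp hker
  choose D hD using fun i => exists_lintegral_chartMajorant_le hβ hc.le (Φ p i)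
  refine ⟨C * ∏ i, D i, min ε₁ ε₂, lt_min hε₁ hε₂, fun u hu => ?_⟩
  set S := closedPolydisc n ∩ Φ ⁻¹' carlesonBox u ∩ ball p (min ε₁ ε₂)
  have hS : MeasurableSet S := (measurableSet_inter_preimage_of_continuousOn hΦ.continuousOn
    (isCompact_closedPolydisc n).measurableSet (isOpen_carlesonBox u)).inter measurableSet_ball
  have hSε : S ⊆ closedPolydisc n ∩ ball p ε₂ :=
    inter_subset_inter inter_subset_left (ball_subset_ball (min_le_right _ _))
  let G : (Fin n → ℂ) → ℝ≥0∞ := fun w => ∏ i, chartMajorant β c (Φ p i) (u i) (w i)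
  have hG : Measurable G := Finset.measurable_fun_prod _ fun i _ =>
    (measurable_chartMajorant ..).comp (measurable_pi_apply i)
  calc Vbeta n β S = ∫⁻ z in S, ∏ j, discWeight β (z j) := by
        rw [Vbeta_eq_withDensity_prod_discWeight n hβ, withDensity_apply _ hS]
    _ ≤ ∫⁻ z in S, G (boundaryChart Φ p e z) := setLIntegral_mono' hS fun z hz =>
        hdensity u hu z ⟨hz.1, ball_subset_ball (min_le_left _ _) hz.2⟩
    _ ≤ ∫⁻ z in closedPolydisc n ∩ ball p ε₂, G (boundaryChart Φ p e z) := lintegral_mono_set hSε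
    _ ≤ C * ∫⁻ w, G w := hchart G hG
    _ = C * ∏ i, ∫⁻ w, chartMajorant β c (Φ p i) (u i) w := by
        rw [volume_pi, lintegral_pi_prod_eq_prod_lintegral _ fun i => measurable_chartMajorant ..]
    _ ≤ C * ∏ i, (D i * ENNReal.ofReal ((1 - ‖u i‖ ^ 2) ^ (2 + β))) := by
        gcongr with i _
        exact hD i (u i) (hu i)
    _ = ↑(C * ∏ i, D i) * ∏ i, ENNReal.ofReal ((1 - ‖u i‖ ^ 2) ^ (2 + β)) := by
        rw [Finset.prod_mul_distrib, ENNReal.coe_mul, ENNReal.ofNNReal_finsetProd, mul_assoc]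

theorem exists_Vbeta_preimage_carlesonBox_le (hΦ : ContDiffOn ℂ 1 Φ (closedPolydisc n))
    (hmaps : MapsTo Φ (closedPolydisc n) (closedPolydisc n))
    (hind : ∀ p ∈ closedPolydisc n, LinearIndepOn ℂ (jacobian Φ p) (unimodularSet Φ p)) {β : ℝ}
    (hβ : -1 < β) :
    ∃ C : ℝ≥0, ∀ u ∈ polydisc n, Vbeta n β (Φ ⁻¹' carlesonBox u) ≤
      C * ∏ i, ENNReal.ofReal ((1 - ‖u i‖ ^ 2) ^ (2 + β)) := by
  have hlocal : ∀ p ∈ closedPolydisc n, _ := fun p hp =>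
    exists_Vbeta_inter_preimage_carlesonBox_inter_ball_le hΦ hmaps hp (hind p hp) hβ
  choose! C ε hε hC using hlocal
  obtain ⟨t, ht, hcover⟩ := (isCompact_closedPolydisc n).elim_nhds_subcover
    (fun p => ball p (ε p)) fun p hp => ball_mem_nhds p (hε p hp)
  refine ⟨∑ p ∈ t, C p, fun u hu => ?_⟩
  calc Vbeta n β (Φ ⁻¹' carlesonBox u)
      ≤ Vbeta n β (⋃ p ∈ t, closedPolydisc n ∩ Φ ⁻¹' carlesonBox u ∩ ball p (ε p)) := by
        rw [← inter_iUnion₂]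
        refine measure_mono_ae ?_
        filter_upwards [ae_Vbeta_mem_polydisc n β] with z hz hzu
        have hzK := polydisc_subset_closedPolydisc n hz
        exact ⟨⟨hzK, hzu⟩, hcover hzK⟩
    _ ≤ ∑ p ∈ t, Vbeta n β (closedPolydisc n ∩ Φ ⁻¹' carlesonBox u ∩ ball p (ε p)) :=
        measure_biUnion_finset_le _ _
    _ ≤ ∑ p ∈ t, C p * ∏ i, ENNReal.ofReal ((1 - ‖u i‖ ^ 2) ^ (2 + β)) :=
        Finset.sum_le_sum fun p hp => hC p (ht p hp) u hu
    _ = ↑(∑ p ∈ t, C p) * ∏ i, ENNReal.ofReal ((1 - ‖u i‖ ^ 2) ^ (2 + β)) := by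
        rw [ENNReal.ofNNReal_finsetSum, Finset.sum_mul]

end Carleson

section MeanValue

open Real

theorem enorm_le_lintegral_circle {E F : Type*} [NormedAddCommGroup E] [NormedSpace ℂ E]
    [NormedAddCommGroup F] [NormedSpace ℂ F] [CompleteSpace F] {h : E → F} {w v : E} {U : Set E}
    (hh : DifferentiableOn ℂ h U) (hwv : ∀ c : ℂ, ‖c‖ ≤ 1 → w + c • v ∈ U) :
    ‖h w‖ₑ ≤ ENNReal.ofReal (2 * π)⁻¹ *
      ∫⁻ θ in Ioc 0 (2 * π), ‖h (w + Circle.exp θ • v)‖ₑ := by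
  have hslice : DifferentiableOn ℂ (fun c : ℂ => h (w + c • v)) (closedBall 0 1) :=
    hh.comp (by fun_prop) fun c hc => hwv c (mem_closedBall_zero_iff.1 hc)
  have hmean : circleAverage (fun c : ℂ => h (w + c • v)) 0 1 = h w := by
    have := hslice.diffContOnCl_ball subset_rfl
    rw [← abs_one] at this
    simpa only [zero_smul, add_zero] using this.circleAverage
  have hcircle (θ : ℝ) : circleMap 0 1 θ • v = Circle.exp θ • v := by
    rw [circleMap_zero, Complex.ofReal_one, one_mul, Circle.smul_def, Circle.coe_exp]
  rw [← hmean, circleAverage_def, intervalIntegral.integral_of_le (by positivity), enorm_smul,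
    Real.enorm_of_nonneg (by positivity)]
  simp only [hcircle]
  gcongr
  exact enorm_integral_le_lintegral_enorm _

theorem measure_mul_enorm_le_lintegral_of_balanced {E F : Type*} [NormedAddCommGroup E]
    [NormedSpace ℂ E] [MeasurableSpace E] [BorelSpace E] [SecondCountableTopology E]
    [NormedAddCommGroup F] [NormedSpace ℂ F] [CompleteSpace F] (μ : Measure E) [SFinite μ]
    [SMulInvariantMeasure Circle E μ] {h : E → F} {w : E} {U P : Set E}
    (hm : StronglyMeasurable h) (hh : DifferentiableOn ℂ h U) (hP : Balanced ℂ P)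
    (hPm : MeasurableSet P) (hPU : ∀ v ∈ P, w + v ∈ U) :
    μ P * ‖h w‖ₑ ≤ ∫⁻ v in P, ‖h (w + v)‖ₑ ∂μ := by
  have hrot (c : Circle) : ∫⁻ v in P, ‖h (w + c • v)‖ₑ ∂μ = ∫⁻ v in P, ‖h (w + v)‖ₑ ∂μ := by
    have hpre : (c • ·) ⁻¹' P = P := by
      ext v
      simpa [Circle.smul_def] using hP.smul_mem_iff (x := v) (a := (c : ℂ)) (b := 1)
        (by simp [Circle.norm_coe])
    have := (measurePreserving_smul c μ).setLIntegral_comp_preimage_emb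
      (measurableEmbedding_const_smul c) (fun v => ‖h (w + v)‖ₑ) P
    rwa [hpre] at this
  have hmeas : Measurable fun q : E × ℝ => ‖h (w + Circle.exp q.2 • q.1)‖ₑ :=
    (hm.comp_measurable (by fun_prop : Continuous _).measurable).enorm
  calc μ P * ‖h w‖ₑ = ∫⁻ _ in P, ‖h w‖ₑ ∂μ := by rw [setLIntegral_const, mul_comm]
    _ ≤ ∫⁻ v in P, ENNReal.ofReal (2 * π)⁻¹ *
          ∫⁻ θ in Ioc 0 (2 * π), ‖h (w + Circle.exp θ • v)‖ₑ ∂volume ∂μ :=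
        setLIntegral_mono' hPm fun v hv => enorm_le_lintegral_circle hh fun c hc =>
          hPU _ (hP.smul_mem hc hv)
    _ = ENNReal.ofReal (2 * π)⁻¹ *
          ∫⁻ _ in Ioc 0 (2 * π), ∫⁻ v in P, ‖h (w + v)‖ₑ ∂μ := by
        rw [lintegral_const_mul' _ _ ENNReal.ofReal_ne_top,
          lintegral_lintegral_swap hmeas.aemeasurable]
        simp only [hrot]
    _ = ∫⁻ v in P, ‖h (w + v)‖ₑ ∂μ := by
        rw [setLIntegral_const, Real.volume_Ioc, sub_zero, mul_left_comm,
          ← ENNReal.ofReal_mul (by positivity), inv_mul_cancel₀ (by positivity),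
          ENNReal.ofReal_one, mul_one]

instance (n : ℕ) : SMulInvariantMeasure Circle (Fin n → ℂ) volume where
  measure_preimage_smul c _ hs :=
    (volume_preserving_pi fun _ => (rotation c).measurePreserving).measure_preimage
      hs.nullMeasurableSet

end MeanValue

section CarlesonEmbedding

variable {n : ℕ} {β : ℝ}

/-- The reciprocal volume of a polydisc whose radii are a fixed fraction of those of
`carlesonBox u`; it dominates the one in the mean value inequality at any point whose averaging
polydisc contains `u`. -/
def carlesonKernel (u : Fin n → ℂ) : ℝ≥0∞ :=
  ∏ i, (volume (ball (0 : ℂ) ((1 - ‖u i‖ ^ 2) / 6)))⁻¹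

theorem measurable_carlesonKernel : Measurable (carlesonKernel (n := n)) := by
  unfold carlesonKernel
  simp only [Complex.volume_ball]
  fun_prop

theorem carlesonKernel_mul_prod_ofReal_rpow (hβ : -1 < β) {u : Fin n → ℂ} (hu : u ∈ polydisc n) :
    carlesonKernel u * ∏ i, ENNReal.ofReal ((1 - ‖u i‖ ^ 2) ^ (2 + β)) =
      ENNReal.ofReal (36 / (β + 1)) ^ n * ∏ i, discWeight β (u i) := by
  have hβ1 : 0 < β + 1 := by linarith
  have hcoord (i : Fin n) : (volume (ball (0 : ℂ) ((1 - ‖u i‖ ^ 2) / 6)))⁻¹ *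
      ENNReal.ofReal ((1 - ‖u i‖ ^ 2) ^ (2 + β)) =
        ENNReal.ofReal (36 / (β + 1)) * discWeight β (u i) := by
    have hδ := one_sub_norm_sq_pos (hu i)
    have hpi : (NNReal.pi : ℝ≥0∞) = ENNReal.ofReal Real.pi := ENNReal.ofReal_coe_nnreal.symm
    rw [Complex.volume_ball, ← ENNReal.ofReal_pow (by positivity), hpi,
      ← ENNReal.ofReal_mul (by positivity),
      ← ENNReal.ofReal_inv_of_pos (by positivity), ← ENNReal.ofReal_mul (by positivity),
      discWeight_of_norm_lt_one (hu i), ← ENNReal.ofReal_mul (by positivity),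
      Real.rpow_add hδ, Real.rpow_two]
    congr 1
    field
  rw [carlesonKernel, ← Finset.prod_mul_distrib, Finset.prod_congr rfl fun i _ => hcoord i,
    Finset.prod_mul_distrib, Finset.prod_const, Finset.card_univ, Fintype.card_fin]

theorem mem_polydisc_of_mem_carlesonBox {u w : Fin n → ℂ} (hw : w ∈ carlesonBox u) :
    u ∈ polydisc n := fun i => by
  have hδ := (norm_nonneg _).trans_lt (hw i)
  exact lt_of_pow_lt_pow_left₀ 2 zero_le_one (by linarith)

theorem norm_add_lt_one_of_mem_ball {w v : ℂ} (hw : ‖w‖ < 1)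
    (hv : v ∈ ball (0 : ℂ) ((1 - ‖w‖) / 2)) : ‖w + v‖ < 1 := by
  have := norm_add_le w v
  rw [mem_ball_zero_iff] at hv
  linarith

theorem mem_carlesonBox_add {w v : Fin n → ℂ} (hw : w ∈ polydisc n)
    (hv : ∀ i, v i ∈ ball (0 : ℂ) ((1 - ‖w i‖) / 2)) : w ∈ carlesonBox (w + v) := fun i => by
  have hlt := norm_add_lt_one_of_mem_ball (hw i) (hv i)
  have hle := norm_add_le (w i) (v i)
  have hvi := mem_ball_zero_iff.1 (hv i)
  rw [Pi.add_apply, sub_add_cancel_left, norm_neg]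
  nlinarith [norm_nonneg (w i + v i)]

theorem inv_volume_pi_ball_le_carlesonKernel {w v : Fin n → ℂ} (hw : w ∈ polydisc n)
    (hv : ∀ i, v i ∈ ball (0 : ℂ) ((1 - ‖w i‖) / 2)) :
    (volume (univ.pi fun i => ball (0 : ℂ) ((1 - ‖w i‖) / 2)))⁻¹ ≤ carlesonKernel (w + v) := by
  rw [volume_pi_pi, carlesonKernel, ENNReal.prod_inv_distrib
    fun _ _ _ _ _ => Or.inr measure_ball_lt_top.ne]
  refine Finset.prod_le_prod' fun i _ => ENNReal.inv_le_inv.2 <| measure_mono <|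
    ball_subset_ball ?_
  have hlt := norm_add_lt_one_of_mem_ball (hw i) (hv i)
  have hle := norm_sub_le (w i + v i) (v i)
  have hvi := mem_ball_zero_iff.1 (hv i)
  rw [add_sub_cancel_right] at hle
  rw [Pi.add_apply]
  nlinarith [norm_nonneg (w i + v i)]

theorem enorm_sq_le_lintegral_carlesonKernel {f : (Fin n → ℂ) → ℂ} (hm : Measurable f)
    (hf : DifferentiableOn ℂ f (polydisc n)) {w : Fin n → ℂ} (hw : w ∈ polydisc n) :
    ‖f w‖ₑ ^ 2 ≤ ∫⁻ u, {u | w ∈ carlesonBox u}.indicator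
      (fun u => carlesonKernel u * ‖f u‖ₑ ^ 2) u := by
  set P : Set (Fin n → ℂ) := univ.pi fun i => ball 0 ((1 - ‖w i‖) / 2)
  have hPm : MeasurableSet P := MeasurableSet.univ_pi fun _ => measurableSet_ball
  have hvol0 : volume P ≠ 0 := by
    rw [volume_pi_pi, Finset.prod_ne_zero_iff]
    exact fun i _ => (measure_ball_pos _ _ (half_pos (sub_pos.2 (hw i)))).ne'
  have hvol : volume P ≠ ∞ := by
    rw [volume_pi_pi]
    exact ENNReal.prod_ne_top fun _ _ => measure_ball_lt_top.ne
  have hbal : Balanced ℂ P := balanced_iff_smul_mem.2 fun c hc v hv i hi =>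
    balanced_ball_zero.smul_mem hc (hv i hi)
  have hmean : volume P * ‖f w‖ₑ ^ 2 ≤ ∫⁻ v in P, ‖f (w + v)‖ₑ ^ 2 := by
    simpa only [enorm_pow] using measure_mul_enorm_le_lintegral_of_balanced volume
      (hm.pow_const 2).stronglyMeasurable (hf.fun_pow 2) hbal hPm fun v hv i =>
        norm_add_lt_one_of_mem_ball (hw i) (hv i (mem_univ i))
  set G := {u | w ∈ carlesonBox u}.indicator fun u => carlesonKernel u * ‖f u‖ₑ ^ 2 with hG
  calc ‖f w‖ₑ ^ 2 = (volume P)⁻¹ * (volume P * ‖f w‖ₑ ^ 2) := by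
        rw [← mul_assoc, ENNReal.inv_mul_cancel hvol0 hvol, one_mul]
    _ ≤ (volume P)⁻¹ * ∫⁻ v in P, ‖f (w + v)‖ₑ ^ 2 := by gcongr
    _ = ∫⁻ v in P, (volume P)⁻¹ * ‖f (w + v)‖ₑ ^ 2 :=
        (lintegral_const_mul' _ _ (ENNReal.inv_ne_top.2 hvol0)).symm
    _ ≤ ∫⁻ v in P, G (w + v) := by
        refine setLIntegral_mono' hPm fun v hv => ?_
        have hv' := fun i => hv i (mem_univ i)
        rw [hG, indicator_of_mem (show w + v ∈ {u | w ∈ carlesonBox u} from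
          mem_carlesonBox_add hw hv')]
        gcongr
        exact inv_volume_pi_ball_le_carlesonKernel hw hv'
    _ ≤ ∫⁻ v, G (w + v) := setLIntegral_le_lintegral _ _
    _ = ∫⁻ u, G u := lintegral_add_left_eq_self _ w

theorem measure_carlesonBox_mul_carlesonKernel_le {μ : Measure (Fin n → ℂ)} {C : ℝ≥0}
    (hβ : -1 < β) (hμ : ∀ u ∈ polydisc n,
      μ (carlesonBox u) ≤ C * ∏ i, ENNReal.ofReal ((1 - ‖u i‖ ^ 2) ^ (2 + β)))
    (u : Fin n → ℂ) :
    μ (carlesonBox u) * carlesonKernel u ≤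
      C * ENNReal.ofReal (36 / (β + 1)) ^ n * ∏ i, discWeight β (u i) := by
  by_cases hu : u ∈ polydisc n
  · calc μ (carlesonBox u) * carlesonKernel u
        ≤ C * (∏ i, ENNReal.ofReal ((1 - ‖u i‖ ^ 2) ^ (2 + β))) * carlesonKernel u := by
          gcongr
          exact hμ u hu
      _ = C * ENNReal.ofReal (36 / (β + 1)) ^ n * ∏ i, discWeight β (u i) := by
          rw [mul_assoc, mul_comm _ (carlesonKernel u), carlesonKernel_mul_prod_ofReal_rpow hβ hu,
            mul_assoc]
  · have hempty : carlesonBox u = ∅ :=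
      eq_empty_of_forall_notMem fun w hw => hu (mem_polydisc_of_mem_carlesonBox hw)
    rw [hempty, measure_empty, zero_mul]
    exact zero_le

theorem measurableSet_mem_carlesonBox (n : ℕ) :
    MeasurableSet {q : (Fin n → ℂ) × (Fin n → ℂ) | q.1 ∈ carlesonBox q.2} := by
  change MeasurableSet {q : (Fin n → ℂ) × (Fin n → ℂ) | ∀ i, ‖q.1 i - q.2 i‖ < 1 - ‖q.2 i‖ ^ 2}
  rw [ofPred_forall]
  exact MeasurableSet.iInter fun i => measurableSet_lt (by fun_prop) (by fun_prop)

theorem lintegral_lintegral_indicator_carlesonBox (μ : Measure (Fin n → ℂ)) [SFinite μ]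
    {F : (Fin n → ℂ) → ℝ≥0∞} (hF : Measurable F) :
    ∫⁻ w, ∫⁻ u, {u | w ∈ carlesonBox u}.indicator F u ∂volume ∂μ =
      ∫⁻ u, μ (carlesonBox u) * F u := by
  calc ∫⁻ w, ∫⁻ u, {u | w ∈ carlesonBox u}.indicator F u ∂volume ∂μ
      = ∫⁻ u, ∫⁻ w, (carlesonBox u).indicator (fun _ => F u) w ∂μ :=
        lintegral_lintegral_swap (f := fun w u => {u | w ∈ carlesonBox u}.indicator F u)
          ((hF.comp measurable_snd).indicator (measurableSet_mem_carlesonBox n)).aemeasurable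
    _ = ∫⁻ u, μ (carlesonBox u) * F u := lintegral_congr fun u => by
        rw [lintegral_indicator_const (isOpen_carlesonBox u).measurableSet, mul_comm]

theorem lintegral_polydisc_enorm_sq_le_of_carleson {μ : Measure (Fin n → ℂ)} [SFinite μ]
    {C : ℝ≥0} (hβ : -1 < β) (hμ : ∀ u ∈ polydisc n,
      μ (carlesonBox u) ≤ C * ∏ i, ENNReal.ofReal ((1 - ‖u i‖ ^ 2) ^ (2 + β)))
    {f : (Fin n → ℂ) → ℂ} (hf : DifferentiableOn ℂ f (polydisc n)) :
    ∫⁻ w in polydisc n, ‖f w‖ₑ ^ 2 ∂μ ≤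
      C * ENNReal.ofReal (36 / (β + 1)) ^ n * ∫⁻ u, ‖f u‖ₑ ^ 2 ∂Vbeta n β := by
  classical
  have hpoly := (isOpen_polydisc n).measurableSet
  set g := (polydisc n).piecewise f 0
  have hgf : EqOn g f (polydisc n) := piecewise_eqOn _ _ _
  have hgm : Measurable g := hf.continuousOn.measurable_piecewise continuousOn_const hpoly
  have hgsq : Measurable fun u => ‖g u‖ₑ ^ 2 := hgm.enorm.pow_const 2
  let F : (Fin n → ℂ) → ℝ≥0∞ := fun u => carlesonKernel u * ‖g u‖ₑ ^ 2
  calc ∫⁻ w in polydisc n, ‖f w‖ₑ ^ 2 ∂μ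
      ≤ ∫⁻ w in polydisc n, ∫⁻ u, {u | w ∈ carlesonBox u}.indicator F u ∂volume ∂μ := by
        refine setLIntegral_mono' hpoly fun w hw => ?_
        rw [← hgf hw]
        exact enorm_sq_le_lintegral_carlesonKernel hgm (hf.congr hgf) hw
    _ ≤ ∫⁻ w, ∫⁻ u, {u | w ∈ carlesonBox u}.indicator F u ∂volume ∂μ :=
        setLIntegral_le_lintegral _ _
    _ = ∫⁻ u, μ (carlesonBox u) * F u :=
        lintegral_lintegral_indicator_carlesonBox μ (measurable_carlesonKernel.mul hgsq)
    _ ≤ ∫⁻ u, C * ENNReal.ofReal (36 / (β + 1)) ^ n *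
          ((∏ i, discWeight β (u i)) * ‖g u‖ₑ ^ 2) := lintegral_mono fun u => by
        simp only [F, ← mul_assoc]
        exact mul_le_mul_left (measure_carlesonBox_mul_carlesonKernel_le hβ hμ u) _
    _ = C * ENNReal.ofReal (36 / (β + 1)) ^ n * ∫⁻ u, ‖g u‖ₑ ^ 2 ∂Vbeta n β := by
        rw [lintegral_const_mul' _ _ (by finiteness), lintegral_Vbeta hβ hgsq]
    _ = C * ENNReal.ofReal (36 / (β + 1)) ^ n * ∫⁻ u, ‖f u‖ₑ ^ 2 ∂Vbeta n β := by
        congr 1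
        refine lintegral_congr_ae ?_
        filter_upwards [ae_Vbeta_mem_polydisc n β] with u hu
        rw [hgf hu]

instance (n : ℕ) (β : ℝ) : SFinite (Vbeta n β) := by
  unfold Vbeta
  infer_instance

theorem lintegral_enorm_sq_comp_le_of_carleson {Φ : (Fin n → ℂ) → Fin n → ℂ} (hβ : -1 < β)
    (hΦ : ContinuousOn Φ (polydisc n)) (hmaps : MapsTo Φ (polydisc n) (polydisc n))
    {C : ℝ≥0} (hC : ∀ u ∈ polydisc n, Vbeta n β (Φ ⁻¹' carlesonBox u) ≤
      C * ∏ i, ENNReal.ofReal ((1 - ‖u i‖ ^ 2) ^ (2 + β)))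
    {f : (Fin n → ℂ) → ℂ} (hf : DifferentiableOn ℂ f (polydisc n)) :
    ∫⁻ z, ‖f (Φ z)‖ₑ ^ 2 ∂Vbeta n β ≤
      C * ENNReal.ofReal (36 / (β + 1)) ^ n * ∫⁻ z, ‖f z‖ₑ ^ 2 ∂Vbeta n β := by
  have hpoly := (isOpen_polydisc n).measurableSet
  have hΦm : AEMeasurable Φ (Vbeta n β) :=
    (hΦ.aemeasurable hpoly).mono_ac (withDensity_absolutelyContinuous _ _)
  set μ := (Vbeta n β).map Φ with hμ
  have hμC : ∀ u ∈ polydisc n, μ (carlesonBox u) ≤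
      C * ∏ i, ENNReal.ofReal ((1 - ‖u i‖ ^ 2) ^ (2 + β)) := fun u hu => by
    rw [hμ, Measure.map_apply_of_aemeasurable hΦm (isOpen_carlesonBox u).measurableSet]
    exact hC u hu
  have hμpoly : μ.restrict (polydisc n) = μ :=
    Measure.restrict_eq_self_of_ae_mem <| (ae_map_iff hΦm hpoly).2 <|
      (ae_Vbeta_mem_polydisc n β).mono fun _ hz => hmaps hz
  have hfsq : AEMeasurable (fun w => ‖f w‖ₑ ^ 2) μ := by
    rw [← hμpoly]
    exact (hf.continuousOn.aemeasurable hpoly).enorm.pow_const 2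
  rw [← lintegral_map' hfsq hΦm, ← hμ, ← hμpoly]
  exact lintegral_polydisc_enorm_sq_le_of_carleson hβ hμC hf

theorem bddBergman_of_carleson {Φ : (Fin n → ℂ) → Fin n → ℂ} (hβ : -1 < β)
    (hΦ : ContinuousOn Φ (polydisc n)) (hmaps : MapsTo Φ (polydisc n) (polydisc n))
    {C : ℝ≥0} (hC : ∀ u ∈ polydisc n, Vbeta n β (Φ ⁻¹' carlesonBox u) ≤
      C * ∏ i, ENNReal.ofReal ((1 - ‖u i‖ ^ 2) ^ (2 + β))) :
    bddBergman n β Φ := by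
  have hβ1 : 0 < β + 1 := by linarith
  have henorm (x : ℂ) : ENNReal.ofReal (‖x‖ ^ 2) = ‖x‖ₑ ^ 2 := by
    rw [ENNReal.ofReal_pow (norm_nonneg x), ofReal_norm]
  refine ⟨C * (36 / (β + 1)) ^ n + 1, by positivity, fun f hf => ?_⟩
  simp only [henorm]
  refine (lintegral_enorm_sq_comp_le_of_carleson hβ hΦ hmaps hC hf).trans ?_
  gcongr
  rw [← ENNReal.ofReal_coe_nnreal, ← ENNReal.ofReal_pow (by positivity),
    ← ENNReal.ofReal_mul (by positivity)]
  exact ENNReal.ofReal_le_ofReal (by linarith)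

end CarlesonEmbedding

theorem rank_sufficiency_bergman (n : ℕ) (Φ : (Fin n → ℂ) → (Fin n → ℂ))
    (hhol : DifferentiableOn ℂ Φ (polydisc n))
    (hsm : ContDiffOn ℝ 1 Φ (closedPolydisc n))
    (hmap : ∀ z ∈ polydisc n, Φ z ∈ polydisc n)
    (hrank : rankCond n Φ) :
    ∀ β : ℝ, -1 < β → bddBergman n β Φ := by
  intro β hβ
  have hΦ : ContDiffOn ℂ 1 Φ (closedPolydisc n) :=
    contDiffOn_complex_one_of_differentiableOn (isOpen_polydisc n)
      (polydisc_subset_closedPolydisc n) (closure_polydisc n).ge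
      (uniqueDiffOn_real_closedPolydisc n) hhol hsm
  have hmaps : MapsTo Φ (closedPolydisc n) (closedPolydisc n) := by
    have hcont := hsm.continuousOn
    rw [← closure_polydisc] at hcont ⊢
    exact MapsTo.closure_of_continuousOn hmap hcont
  have hind : ∀ p ∈ closedPolydisc n, LinearIndepOn ℂ (jacobian Φ p) (unimodularSet Φ p) :=
    fun _ => linearIndepOn_jacobian hΦ hmaps fun _ =>
      linearIndepOn_jacobian_of_rankCond hhol hsm hrank
  obtain ⟨C, hC⟩ := exists_Vbeta_preimage_carlesonBox_le hΦ hmaps hind hβ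
  exact bddBergman_of_carleson hβ hhol.continuousOn hmap hC

end
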